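/- (Simultaneous resolution.) Terminology. A function $k$ on $[0,a]$ is called $N$-Puiseux if $x\mapsto k(x^N)$ is real analytic on (a neighborhood of) $[0,a^{1/N}]$, and $k(x)=lx^s+\cdots$ means $k(x)=lx^s+o(x^s)$ as $x\to0^+$. A real-analytic function $F$ is *$\eta$-comparable* to the monomial $d\,x^{\alpha}y^{\beta}$ on $D$ ($d\ne0$, $\alpha\ge 0$ rational, $\beta\ge 0$ an integer) if for all integers $0\le l\le\alpha$, $0\le m\le\beta$ one has on $D$ $$|\partial_x^l\partial_y^mF-\alpha\cdots(\alpha-l+1)\,\beta\cdots(\beta-m+1)\,d\,x^{\alpha-l}y^{\beta-m}|\le\eta|d|x^{\alpha-l}y^{\beta-m}.$$ A *resolution of $P$ on $\{0\le y\le bx\}$ with error $\eta$* consists of $a>0$, an integer $N\ge1$ and finitely many domains $D_i'=\{0<x<a,\ g_i(x)<y<G_i(x)\}$ and maps $\eta_i(x,y)=(x,\pm y+k_i(x))$ with $k_i,g_i,G_i$ $N$-Puiseux, $k_i(x)=l_ix^{s_i}+\cdots$, $s_i\ge1$, $G_i(x)=H_ix^{M_i}+\cdots$, $H_i>0$, $M_i\ge1$,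 such that $\{0\le x\le a,\ 0\le y\le bx\}=\bigcup_i\overline{\eta_i(D_i')}$, such that $P\circ\eta_i$ is $\eta$-comparable to some $d_ix^{\alpha_i}y^{\beta_i}$ on $D_i'$, and such that $g_i\equiv0$ and $G_i(x)=H_ix^{M_i}$ if $\beta_i=0$, while if $\beta_i>0$ either $g_i\equiv0$ or $g_i(x)=h_ix^{m_i}+\cdots$ with $h_i>0$, $m_i>M_i$. Theorem. Suppose $S_1,\dots,S_k$ are real analytic on a neighborhood of the origin in $\mathbb R^2$, none identically zero near the origin, with $S_j(0,0)=0$ for each $j$. Let $b>0$, $0<\eta<1$, and let $D_i',\eta_i,\alpha_i,\beta_i$ be a resolution of $\prod_{j=1}^kS_j$ on $\{0\le y\le bx\}$ with error $\eta$. Then for every $\eta'>0$ there is $a_0\in(0,a]$ such that for each $i$ the set $D_i'\cap\{x<a_0\}$ can be divided into finitely many pairwise disjoint pieces, whose closures cover it, with the following property. Each piece is carried by a coordinate change $(x,y)\to(x,y-c_{il}x^{M_i})$ or (only if $g_i\not\equiv0$) $(x,y)\to(x,y-c_{il}x^{m_i})$, $c_{il}\ge0$, onto a domain $D_{il}'=\{0<x<a_0,\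 g_{il}(x)<y<G_{il}(x)\}$ with $g_{il},G_{il}$ $N$-Puiseux, $G_{il}(x)=H_{il}x^{M_{il}}+\cdots$, $g_{il}(x)=h_{il}x^{m_{il}}+\cdots$, $1\le M_{il}<m_{il}$, $h_{il}\ge0$, $H_{il}>0$, on which every $S_j$, written in the new coordinates, i.e. $(x,y)\mapsto S_j(\eta_i(x,y+c_{il}x^{M_i}))$, respectively $S_j(\eta_i(x,y+c_{il}x^{m_i}))$, is $\eta'$-comparable to some monomial $d_{ilj}x^{\alpha_{ilj}}y^{\beta_{ilj}}$. Moreover $g_{il}\equiv0$ or $h_{il}>0$ whenever some $\beta_{ilj}>0$, or $g_i\equiv0$, or $g_i(x)\ge h_ix^{m_i}$ for all small $x>0$. -/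

import Mathlib

open Set Filter
open scoped Topology

noncomputable section

/-- `k(x^N)` is real analytic: there is a function `K`, real analytic at every point `t` of the
closed interval given by `0 ≤ t`, `t^N ≤ a`, with `k(t^N) = K(t)` on that interval. -/
def PuiseuxOn (N : ℕ) (a : ℝ) (k : ℝ → ℝ) : Prop :=
  ∃ K : ℝ → ℝ, AnalyticOnNhd ℝ K {t : ℝ | 0 ≤ t ∧ t ^ N ≤ a} ∧
    ∀ t : ℝ, 0 ≤ t → t ^ N ≤ a → k (t ^ N) = K t

/-- `k(x) = l x^s + higher order terms` as `x → 0⁺`, that is, `k(x) = l x^s + o(x^s)`. -/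
def LeadingTerm (k : ℝ → ℝ) (l s : ℝ) : Prop :=
  Tendsto (fun x => k x / x ^ s) (𝓝[>] (0 : ℝ)) (𝓝 l)

/-- The mixed partial derivative `∂_x^l ∂_y^m F`. -/
def pderiv2 (l m : ℕ) (F : ℝ × ℝ → ℝ) (p : ℝ × ℝ) : ℝ :=
  iteratedDeriv l (fun x => iteratedDeriv m (fun y => F (x, y)) p.2) p.1

/-- The descending product `α (α - 1) ⋯ (α - l + 1)`. -/
def descProd (α : ℝ) (l : ℕ) : ℝ := ∏ j ∈ Finset.range l, (α - (j : ℝ))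

/-- The domain `{(x,y) : 0 < x < a, g(x) < y < G(x)}`. -/
def sliverSet (a : ℝ) (g G : ℝ → ℝ) : Set (ℝ × ℝ) :=
  {q : ℝ × ℝ | 0 < q.1 ∧ q.1 < a ∧ g q.1 < q.2 ∧ q.2 < G q.1}

/-- The closed triangle `{(x,y) : 0 ≤ x ≤ a, 0 ≤ y ≤ b x}`. -/
def closedTriangle (a b : ℝ) : Set (ℝ × ℝ) :=
  {q : ℝ × ℝ | 0 ≤ q.1 ∧ q.1 ≤ a ∧ 0 ≤ q.2 ∧ q.2 ≤ b * q.1}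

/-- The map `(x,y) ↦ (x, σ y + k(x))`. -/
def shear (σ : ℝ) (k : ℝ → ℝ) (q : ℝ × ℝ) : ℝ × ℝ := (q.1, σ * q.2 + k q.1)

/-- On `D` the function `F` is real analytic and agrees with the monomial `d x^α y^β` up to the
relative error `η`, together with all derivatives `∂_x^l ∂_y^m`, `0 ≤ l ≤ α`, `0 ≤ m ≤ β`. -/
def MonomialOn (F : ℝ × ℝ → ℝ) (D : Set (ℝ × ℝ)) (α : ℚ) (β : ℕ) (d η : ℝ) : Prop :=
  ∀ p ∈ D, AnalyticAt ℝ F p ∧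
    ∀ l : ℕ, (l : ℚ) ≤ α → ∀ m : ℕ, m ≤ β →
      |pderiv2 l m F p -
          descProd (α : ℝ) l * descProd (β : ℝ) m * d * p.1 ^ ((α : ℝ) - l) * p.2 ^ (β - m)| ≤
        η * |d| * p.1 ^ ((α : ℝ) - l) * p.2 ^ (β - m)

/-- A resolution of singularities of `P` on the triangle below the line `y = b x`, with relative
error `η`: a number `a > 0`, an integer `N ≥ 1` and finitely many domains
`D i = {0 < x < a, g i x < y < G i x}` whose images under the coordinate changes
`(x,y) ↦ (x, σ i * y + k i x)` have closures that fill up `{0 ≤ x ≤ a, 0 ≤ y ≤ b x}`, and such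
that `P` becomes comparable to the monomial `d i * x ^ α i * y ^ β i` on `D i`. -/
structure TriangleResolution (P : ℝ × ℝ → ℝ) (b η : ℝ) where
  a : ℝ
  a_pos : 0 < a
  N : ℕ
  N_pos : 0 < N
  n : ℕ
  σ : Fin n → ℝ
  σ_sign : ∀ i, σ i = 1 ∨ σ i = -1
  k : Fin n → ℝ → ℝ
  k_puiseux : ∀ i, PuiseuxOn N a (k i)
  k_order : ∀ i, ∃ l s : ℝ, 1 ≤ s ∧ LeadingTerm (k i) l s
  g : Fin n → ℝ → ℝ
  G : Fin n → ℝ → ℝ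
  g_puiseux : ∀ i, PuiseuxOn N a (g i)
  G_puiseux : ∀ i, PuiseuxOn N a (G i)
  H : Fin n → ℝ
  M : Fin n → ℝ
  H_pos : ∀ i, 0 < H i
  one_le_M : ∀ i, 1 ≤ M i
  G_lead : ∀ i, LeadingTerm (G i) (H i) (M i)
  /-- The coefficient `h i` and the exponent `m i` of the leading term of `g i`; they are
  meaningful only where `g i` is not identically zero. -/
  h : Fin n → ℝ
  m : Fin n → ℝ
  α : Fin n → ℚ
  β : Fin n → ℕ
  d : Fin n → ℝ
  α_nonneg : ∀ i, 0 ≤ α i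
  d_ne : ∀ i, d i ≠ 0
  G_of_zero : ∀ i, β i = 0 → ∀ x ∈ Ioo 0 a, G i x = H i * x ^ M i
  g_of_zero : ∀ i, β i = 0 → ∀ x ∈ Ioo 0 a, g i x = 0
  g_of_pos : ∀ i, 0 < β i → (∀ x ∈ Ioo 0 a, g i x = 0) ∨
    (0 < h i ∧ M i < m i ∧ LeadingTerm (g i) (h i) (m i))
  cover : closedTriangle a b = ⋃ i, closure (shear (σ i) (k i) '' sliverSet a (g i) (G i))
  monomial : ∀ i,
    MonomialOn (fun q => P (shear (σ i) (k i) q)) (sliverSet a (g i) (G i)) (α i) (β i) (d i) η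

end

/-- The linear map `(t, y) ↦ (t, s y)`. -/
noncomputable def scaleSnd (s : ℝ) : ℝ × ℝ →L[ℝ] ℝ × ℝ :=
  (ContinuousLinearMap.fst ℝ ℝ ℝ).prod (s • ContinuousLinearMap.snd ℝ ℝ ℝ)

@[simp] lemma scaleSnd_apply (s : ℝ) (z : ℝ × ℝ) : scaleSnd s z = (z.1, s * z.2) := rfl

lemma norm_scaleSnd_apply_le {s : ℝ} (hs : s ∈ Icc (0 : ℝ) 1) (z : ℝ × ℝ) :
    ‖scaleSnd s z‖ ≤ ‖z‖ := by
  rw [scaleSnd_apply, Prod.norm_def, Prod.norm_def]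
  refine max_le_max le_rfl ?_
  simp only [norm_mul, Real.norm_eq_abs, abs_of_nonneg hs.1]
  exact mul_le_of_le_one_left (abs_nonneg _) hs.2

lemma continuous_scaleSnd : Continuous scaleSnd := by
  have h : scaleSnd = fun s : ℝ => ((ContinuousLinearMap.inl ℝ ℝ ℝ).comp
      (ContinuousLinearMap.fst ℝ ℝ ℝ)) +
      s • ((ContinuousLinearMap.inr ℝ ℝ ℝ).comp (ContinuousLinearMap.snd ℝ ℝ ℝ)) := by
    funext s
    ext <;> simp
  rw [h]
  fun_prop

lemma norm_scaleSnd_le {s : ℝ} (hs : s ∈ Icc (0 : ℝ) 1) : ‖scaleSnd s‖ ≤ 1 :=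
  ContinuousLinearMap.opNorm_le_bound _ zero_le_one fun z => by
    simpa using norm_scaleSnd_apply_le hs z

/-- The power series whose terms are the averages over `s ∈ [0,1]` of the terms of `p` scaled by
`(t, y) ↦ (t, s y)`. -/
noncomputable def averagedSeries (p : FormalMultilinearSeries ℝ (ℝ × ℝ) ℝ) :
    FormalMultilinearSeries ℝ (ℝ × ℝ) ℝ :=
  fun k => ∫ s in (0 : ℝ)..1, (p k).compContinuousLinearMap fun _ => scaleSnd s

lemma continuous_scaled_term (p : FormalMultilinearSeries ℝ (ℝ × ℝ) ℝ) (k : ℕ) :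
    Continuous fun s : ℝ => (p k).compContinuousLinearMap fun _ => scaleSnd s := by
  have h : Continuous fun s : ℝ =>
      (ContinuousMultilinearMap.compContinuousLinearMapContinuousMultilinear ℝ
        (fun _ : Fin k => ℝ × ℝ) (fun _ : Fin k => ℝ × ℝ) ℝ) (fun _ => scaleSnd s) :=
    (ContinuousMultilinearMap.cont _).comp (continuous_pi fun _ => continuous_scaleSnd)
  exact h.clm_apply continuous_const

lemma averagedSeries_apply (p : FormalMultilinearSeries ℝ (ℝ × ℝ) ℝ) (k : ℕ) (z : ℝ × ℝ) :
    averagedSeries p k (fun _ => z) = ∫ s in (0 : ℝ)..1, p k (fun _ => scaleSnd s z) := by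
  have := ((ContinuousMultilinearMap.apply ℝ (fun _ : Fin k => ℝ × ℝ) ℝ
    (fun _ => z))).intervalIntegral_comp_comm (μ := MeasureTheory.volume) (a := 0) (b := 1)
      ((continuous_scaled_term p k).intervalIntegrable 0 1)
  simpa [averagedSeries] using this.symm

lemma norm_averagedSeries_le (p : FormalMultilinearSeries ℝ (ℝ × ℝ) ℝ) (k : ℕ) :
    ‖averagedSeries p k‖ ≤ ‖p k‖ := by
  have := intervalIntegral.norm_integral_le_of_norm_le_const (a := (0 : ℝ)) (b := 1)
    (f := fun s => (p k).compContinuousLinearMap fun _ => scaleSnd s) (C := ‖p k‖) (by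
      intro s hs
      rw [uIoc_of_le zero_le_one] at hs
      refine (ContinuousMultilinearMap.norm_compContinuousLinearMap_le _ _).trans ?_
      refine mul_le_of_le_one_right (norm_nonneg _) ?_
      exact Finset.prod_le_one (fun _ _ => norm_nonneg _)
        fun _ _ => norm_scaleSnd_le ⟨hs.1.le, hs.2⟩)
  simpa [averagedSeries] using this

lemma AnalyticAt.average_scaleSnd {φ : ℝ × ℝ → ℝ} (hφ : AnalyticAt ℝ φ 0) :
    AnalyticAt ℝ (fun z => ∫ s in (0 : ℝ)..1, φ (scaleSnd s z)) 0 := by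
  obtain ⟨p, r, hp⟩ := hφ
  refine ⟨averagedSeries p, r, ?_, hp.r_pos, ?_⟩
  · exact hp.r_le.trans (FormalMultilinearSeries.radius_le_of_le fun k => by
      simpa using norm_averagedSeries_le p k)
  · intro z hz
    have hz' : ∀ s ∈ Icc (0 : ℝ) 1, scaleSnd s z ∈ Metric.eball (0 : ℝ × ℝ) r := fun s hs => by
      rw [Metric.mem_eball] at hz ⊢
      refine lt_of_le_of_lt ?_ hz
      simp only [edist_zero_right]
      exact enorm_le_iff_norm_le.2 (norm_scaleSnd_apply_le hs z)
    simp only [zero_add, averagedSeries_apply]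
    refine intervalIntegral.hasSum_integral_of_dominated_convergence
      (fun k _ => ‖p k‖ * ‖z‖ ^ k) ?_ ?_ ?_ ?_ ?_
    · intro k
      have : Continuous fun s : ℝ => p k fun _ => scaleSnd s z :=
        (ContinuousMultilinearMap.cont _).comp (continuous_pi fun _ =>
          continuous_scaleSnd.clm_apply continuous_const)
      exact this.aestronglyMeasurable
    · intro k
      refine Eventually.of_forall fun s hs => ?_
      rw [uIoc_of_le zero_le_one] at hs
      refine ((p k).le_opNorm _).trans ?_
      simp only [Finset.prod_const, Finset.card_univ, Fintype.card_fin]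
      gcongr
      exact norm_scaleSnd_apply_le ⟨hs.1.le, hs.2⟩ z
    · refine Eventually.of_forall fun s _ => ?_
      have : (‖z‖₊ : ENNReal) < p.radius := by
        have h1 : edist z 0 < r := hz
        rw [edist_zero_right] at h1
        exact h1.trans_le hp.r_le
      simpa using p.summable_norm_mul_pow this
    · simp
    · refine Eventually.of_forall fun s hs => ?_
      rw [uIoc_of_le zero_le_one] at hs
      simpa using hp.hasSum (hz' s ⟨hs.1.le, hs.2⟩)

/-- Division with remainder by the second variable. -/
lemma AnalyticAt.exists_eq_add_snd_mul {Q : ℝ × ℝ → ℝ} (hQ : AnalyticAt ℝ Q 0) :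
    ∃ U : ℝ × ℝ → ℝ, AnalyticAt ℝ U 0 ∧ ∀ᶠ z in 𝓝 (0 : ℝ × ℝ), Q z = Q (z.1, 0) + z.2 * U z := by
  have hd : AnalyticAt ℝ (fun z => fderiv ℝ Q z (0, 1)) 0 :=
    (ContinuousLinearMap.apply ℝ ℝ ((0 : ℝ), (1 : ℝ))).analyticAt _ |>.comp hQ.fderiv
  refine ⟨_, hd.average_scaleSnd, ?_⟩
  obtain ⟨ε, hε, hA⟩ := Metric.eventually_nhds_iff.1 (hQ.eventually_analyticAt.and
    hd.eventually_analyticAt)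
  refine Metric.eventually_nhds_iff.2 ⟨ε, hε, fun z hz => ?_⟩
  have hball : ∀ s ∈ Icc (0 : ℝ) 1, dist (scaleSnd s z) 0 < ε := fun s hs => by
    rw [dist_zero_right] at hz ⊢
    exact (norm_scaleSnd_apply_le hs z).trans_lt hz
  have hder : ∀ s ∈ uIcc (0 : ℝ) 1, HasDerivAt (fun s => Q (scaleSnd s z))
      (z.2 * fderiv ℝ Q (scaleSnd s z) (0, 1)) s := by
    intro s hs
    rw [uIcc_of_le zero_le_one] at hs
    have h1 : HasDerivAt (fun s : ℝ => scaleSnd s z) (z.2 • ((0 : ℝ), (1 : ℝ))) s := by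
      have := (hasDerivAt_const s z.1).prodMk ((hasDerivAt_id s).mul_const z.2)
      simpa using this
    have h2 := (hA (hball s hs)).1.differentiableAt.hasFDerivAt.comp_hasDerivAt s h1
    rw [map_smul, smul_eq_mul] at h2
    exact h2
  have hcont : ContinuousOn (fun s => z.2 * fderiv ℝ Q (scaleSnd s z) (0, 1)) (uIcc (0 : ℝ) 1) := by
    rw [uIcc_of_le zero_le_one]
    intro s hs
    refine ContinuousAt.continuousWithinAt ?_
    refine continuousAt_const.mul ?_
    exact ContinuousAt.comp (f := fun s : ℝ => scaleSnd s z) (x := s)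
      (hA (hball s hs)).2.continuousAt
      (continuous_scaleSnd.clm_apply continuous_const).continuousAt
  have := intervalIntegral.integral_eq_sub_of_hasDerivAt hder hcont.intervalIntegrable
  rw [intervalIntegral.integral_const_mul] at this
  simp only [scaleSnd_apply, one_mul, zero_mul, Prod.mk.eta] at this ⊢
  linarith

lemma AnalyticAt.eventually_eq_zero_or_eq_pow_mul {f : ℝ → ℝ} (hf : AnalyticAt ℝ f 0) :
    (∀ᶠ t in 𝓝 (0 : ℝ), f t = 0) ∨ ∃ (n : ℕ) (g : ℝ → ℝ), AnalyticAt ℝ g 0 ∧ g 0 ≠ 0 ∧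
      ∀ᶠ t in 𝓝 (0 : ℝ), f t = t ^ n * g t := by
  by_cases h : ∀ᶠ t in 𝓝 (0 : ℝ), f t = 0
  · exact Or.inl h
  · obtain ⟨n, g, hg, hg0, he⟩ := hf.exists_eventuallyEq_pow_smul_nonzero_iff.2 h
    exact Or.inr ⟨n, g, hg, hg0, by simpa using he⟩

/-- Division of an analytic function by a power of the second variable. -/
lemma AnalyticAt.exists_eq_sum_add_snd_pow_mul {Q : ℝ × ℝ → ℝ} (hQ : AnalyticAt ℝ Q 0) (B : ℕ) :
    ∃ (c : ℕ → ℝ → ℝ) (U : ℝ × ℝ → ℝ), (∀ k, AnalyticAt ℝ (c k) 0) ∧ AnalyticAt ℝ U 0 ∧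
      ∀ᶠ z in 𝓝 (0 : ℝ × ℝ), Q z = ∑ k ∈ Finset.range B, z.2 ^ k * c k z.1 + z.2 ^ B * U z := by
  induction B with
  | zero => exact ⟨fun _ _ => 0, Q, fun _ => analyticAt_const, hQ, by simp⟩
  | succ B ih =>
    obtain ⟨c, U, hc, hU, he⟩ := ih
    obtain ⟨V, hV, hVe⟩ := hU.exists_eq_add_snd_mul
    refine ⟨Function.update c B fun t => U (t, 0), V, fun k => ?_, hV, ?_⟩
    · by_cases hk : k = B
      · subst hk
        simp only [Function.update_self]
        exact AnalyticAt.comp (f := fun t : ℝ => (t, (0 : ℝ))) hU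
          (analyticAt_id.prod analyticAt_const)
      · simp only [Function.update_of_ne hk, hc k]
    · filter_upwards [he, hVe] with z h1 h2
      rw [h1, Finset.sum_range_succ, Function.update_self, h2]
      have : ∑ k ∈ Finset.range B, z.2 ^ k * Function.update c B (fun t => U (t, 0)) k z.1 =
          ∑ k ∈ Finset.range B, z.2 ^ k * c k z.1 := by
        refine Finset.sum_congr rfl fun k hk => ?_
        rw [Function.update_of_ne (Finset.mem_range.1 hk).ne]
      rw [this]
      ring

/-- An expansion of `Q` near the origin in powers of the second variable up to order `B`, in which
the nonzero coefficient functions are written as `t ^ o k * a k t` with `a k 0 ≠ 0`. -/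
structure NewtonExpansion (Q : ℝ × ℝ → ℝ) (B : ℕ) where
  s : Finset ℕ
  o : ℕ → ℕ
  a : ℕ → ℝ → ℝ
  U : ℝ × ℝ → ℝ
  lt : ∀ k ∈ s, k < B
  analyticAt_a : ∀ k ∈ s, AnalyticAt ℝ (a k) 0
  a_ne : ∀ k ∈ s, a k 0 ≠ 0
  analyticAt_U : AnalyticAt ℝ U 0
  eq : ∀ᶠ z in 𝓝 (0 : ℝ × ℝ),
    Q z = ∑ k ∈ s, z.2 ^ k * (z.1 ^ o k * a k z.1) + z.2 ^ B * U z

lemma AnalyticAt.nonempty_newtonExpansion {Q : ℝ × ℝ → ℝ} (hQ : AnalyticAt ℝ Q 0) (B : ℕ) :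
    Nonempty (NewtonExpansion Q B) := by
  classical
  obtain ⟨c, U, hc, hU, he⟩ := hQ.exists_eq_sum_add_snd_pow_mul B
  have h : ∀ k, ∃ (n : ℕ) (g : ℝ → ℝ), (¬ ∀ᶠ t in 𝓝 (0 : ℝ), c k t = 0) →
      AnalyticAt ℝ g 0 ∧ g 0 ≠ 0 ∧ ∀ᶠ t in 𝓝 (0 : ℝ), c k t = t ^ n * g t := by
    intro k
    rcases (hc k).eventually_eq_zero_or_eq_pow_mul with h | ⟨n, g, h⟩
    · exact ⟨0, 0, fun h' => absurd h h'⟩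
    · exact ⟨n, g, fun _ => h⟩
  choose o a h using h
  refine ⟨⟨(Finset.range B).filter fun k => ¬ ∀ᶠ t in 𝓝 (0 : ℝ), c k t = 0, o, a, U,
    fun k hk => by simpa using (Finset.mem_filter.1 hk).1,
    fun k hk => (h k (Finset.mem_filter.1 hk).2).1,
    fun k hk => (h k (Finset.mem_filter.1 hk).2).2.1, hU, ?_⟩⟩
  have hfst : Tendsto (Prod.fst : ℝ × ℝ → ℝ) (𝓝 0) (𝓝 0) := continuous_fst.tendsto' _ _ rfl
  have hall : ∀ᶠ z in 𝓝 (0 : ℝ × ℝ), ∀ k ∈ Finset.range B,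
      c k z.1 = if ¬ ∀ᶠ t in 𝓝 (0 : ℝ), c k t = 0 then z.1 ^ o k * a k z.1 else 0 := by
    refine (Finset.eventually_all _).2 fun k _ => ?_
    by_cases hk : ∀ᶠ t in 𝓝 (0 : ℝ), c k t = 0
    · filter_upwards [hfst.eventually hk] with z hz
      rw [if_neg (not_not.2 hk), hz]
    · filter_upwards [hfst.eventually (h k hk).2.2] with z hz
      rw [if_pos hk, hz]
  filter_upwards [he, hall] with z h1 h2
  rw [h1, Finset.sum_filter]
  congr 1
  refine Finset.sum_congr rfl fun k hk => ?_
  rw [h2 k hk]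
  split_ifs <;> simp

namespace NewtonExpansion

variable {Q : ℝ × ℝ → ℝ} {B : ℕ} (E : NewtonExpansion Q B)

/-- The quotient of `Q(t, t^ν u)` by `t^A`. -/
noncomputable def quotient (ν A : ℕ) (z : ℝ × ℝ) : ℝ :=
  ∑ k ∈ E.s, z.1 ^ (E.o k + ν * k - A) * z.2 ^ k * E.a k z.1 +
    z.1 ^ (ν * B - A) * z.2 ^ B * E.U (z.1, z.1 ^ ν * z.2)

/-- The quasi-homogeneous part of weight `A` of `Q`, restricted to `t = 1`. -/
noncomputable def face (ν A : ℕ) : Polynomial ℝ :=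
  ∑ k ∈ E.s, if E.o k + ν * k = A then Polynomial.monomial k (E.a k 0) else 0

lemma coeff_face (ν A k : ℕ) :
    (E.face ν A).coeff k = if k ∈ E.s ∧ E.o k + ν * k = A then E.a k 0 else 0 := by
  classical
  rw [face, Polynomial.finsetSum_coeff]
  have : ∀ j ∈ E.s, (if E.o j + ν * j = A then Polynomial.monomial j (E.a j 0) else 0).coeff k =
      if j = k then (if E.o k + ν * k = A then E.a k 0 else 0) else 0 := by
    intro j _
    by_cases hjk : j = k
    · subst hjk
      rw [if_pos rfl]
      split_ifs <;> simp
    · split_ifs <;> simp [Polynomial.coeff_monomial, hjk]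
  rw [Finset.sum_congr rfl this, Finset.sum_ite_eq']
  split_ifs <;> simp_all

lemma face_ne_zero {ν A k : ℕ} (hk : k ∈ E.s) (h : E.o k + ν * k = A) : E.face ν A ≠ 0 := by
  intro h0
  have := E.coeff_face ν A k
  rw [h0, if_pos ⟨hk, h⟩] at this
  exact E.a_ne k hk (by simpa using this.symm)

lemma mem_of_coeff_face_ne_zero {ν A k : ℕ} (h : (E.face ν A).coeff k ≠ 0) :
    k ∈ E.s ∧ E.o k + ν * k = A := by
  rw [coeff_face] at h
  by_contra h'
  exact h (if_neg h')

lemma quotient_zero {ν A : ℕ} (hA : ∀ k ∈ E.s, A ≤ E.o k + ν * k) (hB : A < ν * B) (u : ℝ) :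
    E.quotient ν A (0, u) = (E.face ν A).eval u := by
  rw [quotient, face, Polynomial.eval_finsetSum]
  simp only [zero_pow (Nat.sub_ne_zero_of_lt hB), zero_mul, add_zero]
  refine Finset.sum_congr rfl fun k hk => ?_
  split_ifs with h
  · rw [h]
    simp [mul_comm]
  · have : E.o k + ν * k - A ≠ 0 := Nat.sub_ne_zero_of_lt (lt_of_le_of_ne (hA k hk) (Ne.symm h))
    simp [zero_pow this]

lemma analyticAt_quotient {ν : ℕ} (hν : ν ≠ 0) (A : ℕ) (u : ℝ) :
    AnalyticAt ℝ (E.quotient ν A) (0, u) := by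
  have h1 : AnalyticAt ℝ (fun z : ℝ × ℝ => z.1) (0, u) := analyticAt_fst
  have h2 : AnalyticAt ℝ (fun z : ℝ × ℝ => z.2) (0, u) := analyticAt_snd
  have hU : AnalyticAt ℝ (fun z : ℝ × ℝ => E.U (z.1, z.1 ^ ν * z.2)) (0, u) :=
    AnalyticAt.fun_comp (f := fun z : ℝ × ℝ => (z.1, z.1 ^ ν * z.2))
      (by simpa [zero_pow hν, ← Prod.zero_eq_mk] using E.analyticAt_U) (h1.prod ((h1.pow ν).mul h2))
  refine AnalyticAt.add (Finset.analyticAt_fun_sum _ fun k hk => ?_)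
    (((h1.pow _).mul (h2.pow _)).mul hU)
  exact ((h1.pow _).mul (h2.pow _)).mul
    (AnalyticAt.fun_comp (f := fun z : ℝ × ℝ => z.1) (E.analyticAt_a k hk) h1)

/-- The set of points where the expansion of `Q` holds. -/
def domain : Set (ℝ × ℝ) :=
  {z | Q z = ∑ k ∈ E.s, z.2 ^ k * (z.1 ^ E.o k * E.a k z.1) + z.2 ^ B * E.U z}

lemma eventually_mem_domain : ∀ᶠ z in 𝓝 (0 : ℝ × ℝ), z ∈ E.domain := E.eq

lemma eq_pow_mul_quotient {ν A : ℕ} (hA : ∀ k ∈ E.s, A ≤ E.o k + ν * k) (hB : A ≤ ν * B)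
    {t u : ℝ} (h : (t, t ^ ν * u) ∈ E.domain) :
    Q (t, t ^ ν * u) = t ^ A * E.quotient ν A (t, u) := by
  rw [show Q (t, t ^ ν * u) = _ from h, quotient, mul_add, Finset.mul_sum]
  congr 1
  · refine Finset.sum_congr rfl fun k hk => ?_
    have : t ^ A * t ^ (E.o k + ν * k - A) = t ^ E.o k * (t ^ ν) ^ k := by
      rw [← pow_add, Nat.add_sub_cancel' (hA k hk), pow_add, pow_mul]
    simp only [mul_pow]
    linear_combination (-(u ^ k * E.a k t)) * this
  · have : t ^ A * t ^ (ν * B - A) = (t ^ ν) ^ B := by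
      rw [← pow_add, Nat.add_sub_cancel' hB, pow_mul]
    simp only [mul_pow]
    linear_combination (-(u ^ B * E.U (t, t ^ ν * u))) * this

end NewtonExpansion

lemma tendsto_rpow_nhdsGT_zero {δ : ℝ} (hδ : 0 < δ) :
    Tendsto (fun t : ℝ => t ^ δ) (𝓝[>] 0) (𝓝 0) := by
  have : ContinuousAt (fun t : ℝ => t ^ δ) 0 := Real.continuousAt_rpow_const 0 δ (Or.inr hδ.le)
  have h := this.tendsto
  rw [Real.zero_rpow hδ.ne'] at h
  exact h.mono_left nhdsWithin_le_nhds

lemma exponent_eq_zero {f : ℝ → ℝ} {c δ κ κ' : ℝ} (hf : Tendsto f (𝓝[>] 0) (𝓝 c))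
    (hc : c ≠ 0) (hκ : 0 < κ)
    (h : ∀ᶠ t in 𝓝[>] (0 : ℝ), κ ≤ |f t| * t ^ δ ∧ |f t| * t ^ δ ≤ κ') : δ = 0 := by
  rcases lt_trichotomy δ 0 with hδ | hδ | hδ
  · exfalso
    have h1 : Tendsto (fun t => κ' * t ^ (-δ)) (𝓝[>] 0) (𝓝 (κ' * 0)) :=
      (tendsto_rpow_nhdsGT_zero (neg_pos.2 hδ)).const_mul κ'
    have h2 := le_of_tendsto_of_tendsto hf.abs h1 (by
      filter_upwards [h, self_mem_nhdsWithin] with t ht ht0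
      have := mul_le_mul_of_nonneg_right ht.2 (Real.rpow_nonneg (le_of_lt ht0) (-δ))
      rwa [mul_assoc, ← Real.rpow_add ht0, add_neg_cancel, Real.rpow_zero, mul_one] at this)
    rw [mul_zero] at h2
    exact hc (abs_nonpos_iff.1 h2)
  · exact hδ
  · exfalso
    have h1 : Tendsto (fun t => |f t| * t ^ δ) (𝓝[>] 0) (𝓝 (|c| * 0)) :=
      hf.abs.mul (tendsto_rpow_nhdsGT_zero hδ)
    have := ge_of_tendsto h1 (h.mono fun t ht => ht.1)
    rw [mul_zero] at this
    linarith

lemma pow_eq_rpow_mul_rpow {t : ℝ} (ht : 0 < t) (A : ℕ) (e : ℝ) :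
    t ^ A = t ^ e * t ^ ((A : ℝ) - e) := by
  rw [← Real.rpow_add ht, add_sub_cancel, Real.rpow_natCast]

lemma bounds_of_abs_sub_le {x d η w : ℝ} (h : |x - d * w| ≤ η * |d| * w) (hw : 0 ≤ w) :
    (1 - η) * |d| * w ≤ |x| ∧ |x| ≤ (1 + η) * |d| * w := by
  have h1 : |d * w| = |d| * w := by rw [abs_mul, abs_of_nonneg hw]
  have h2 := abs_sub_abs_le_abs_sub x (d * w)
  have h3 := abs_sub_abs_le_abs_sub (d * w) x
  rw [abs_sub_comm (d * w) x] at h3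
  constructor <;> nlinarith

lemma Polynomial.natTrailingDegree_prod_of_ne_zero {ι : Type*} (s : Finset ι)
    (f : ι → Polynomial ℝ) (h : ∀ i ∈ s, f i ≠ 0) :
    (∏ i ∈ s, f i).natTrailingDegree = ∑ i ∈ s, (f i).natTrailingDegree := by
  classical
  induction s using Finset.induction_on with
  | empty => simp
  | insert i s hi ih =>
    rw [Finset.prod_insert hi, Finset.sum_insert hi, Polynomial.natTrailingDegree_mul
      (h i (Finset.mem_insert_self i s))
      (Finset.prod_ne_zero_iff.2 fun j hj => h j (Finset.mem_insert_of_mem hj)),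
      ih fun j hj => h j (Finset.mem_insert_of_mem hj)]

lemma Polynomial.natTrailingDegree_eq_of_comparable {p : Polynomial ℝ} (hp : p ≠ 0) {d η H : ℝ}
    (hd : d ≠ 0) (hη : η < 1) (hH : 0 < H) {β : ℕ}
    (h : ∀ u ∈ Ioo 0 H, |p.eval u - d * u ^ β| ≤ η * |d| * u ^ β) : p.natTrailingDegree = β := by
  obtain ⟨q, hq, hq0⟩ := p.exists_eq_pow_rootMultiplicity_mul_and_not_dvd hp 0
  rw [Polynomial.rootMultiplicity_eq_natTrailingDegree'] at hq
  set a := p.natTrailingDegree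
  have hq0' : q.eval 0 ≠ 0 := fun h0 => hq0 (Polynomial.dvd_iff_isRoot.2 h0)
  have hpe : ∀ u, p.eval u = u ^ a * q.eval u := fun u => by
    conv_lhs => rw [hq]
    simp
  have hlim : Tendsto (fun u => q.eval u) (𝓝[>] 0) (𝓝 (q.eval 0)) :=
    (q.continuous.tendsto 0).mono_left nhdsWithin_le_nhds
  have := exponent_eq_zero (δ := (a : ℝ) - β) (κ := (1 - η) * |d|) (κ' := (1 + η) * |d|) hlim hq0'
    (mul_pos (by linarith) (abs_pos.2 hd)) (by
      filter_upwards [Ioo_mem_nhdsGT hH] with u hu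
      have h1 := bounds_of_abs_sub_le (h u hu) (pow_nonneg hu.1.le β)
      rw [hpe, abs_mul, abs_of_nonneg (pow_nonneg hu.1.le a), pow_eq_rpow_mul_rpow hu.1 a β,
        Real.rpow_natCast] at h1
      have hpos := pow_pos hu.1 β
      constructor
      · refine le_of_mul_le_mul_right (h1.1.trans_eq ?_) hpos
        ring
      · refine le_of_mul_le_mul_right (le_of_eq_of_le ?_ h1.2) hpos
        ring)
  exact_mod_cast sub_eq_zero.1 this

lemma Polynomial.natDegree_eq_of_comparable {p : Polynomial ℝ} (hp : p ≠ 0) {d η c : ℝ}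
    (hd : d ≠ 0) (hη : η < 1) {β : ℕ}
    (h : ∀ u ∈ Ioi c, |p.eval u - d * u ^ β| ≤ η * |d| * u ^ β) : p.natDegree = β := by
  have hlim : Tendsto (fun u => p.eval u / (Polynomial.X ^ p.natDegree : Polynomial ℝ).eval u) atTop
      (𝓝 (p.leadingCoeff / (Polynomial.X ^ p.natDegree : Polynomial ℝ).leadingCoeff)) := by
    refine Polynomial.div_tendsto_atTop_leadingCoeff_div_of_degree_eq _ _ ?_
    rw [Polynomial.degree_X_pow, Polynomial.degree_eq_natDegree hp]
  simp only [Polynomial.eval_pow, Polynomial.eval_X, Polynomial.leadingCoeff_X_pow, div_one] at hlim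
  set n := p.natDegree
  have := exponent_eq_zero (δ := (β : ℝ) - n) (κ := (1 - η) * |d|) (κ' := (1 + η) * |d|)
    (hlim.comp tendsto_inv_nhdsGT_zero) (Polynomial.leadingCoeff_ne_zero.2 hp)
    (mul_pos (by linarith) (abs_pos.2 hd)) (by
      have hev : ∀ᶠ t : ℝ in 𝓝[>] 0, max c 0 < t⁻¹ :=
        tendsto_inv_nhdsGT_zero.eventually (eventually_gt_atTop (max c 0))
      filter_upwards [hev, self_mem_nhdsWithin] with t ht ht0
      have ht0 : 0 < t := ht0
      have h1 := bounds_of_abs_sub_le (h t⁻¹ ((le_max_left _ _).trans_lt ht))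
        (pow_nonneg (inv_nonneg.2 ht0.le) β)
      have hpos : 0 < t⁻¹ ^ β := pow_pos (inv_pos.2 ht0) β
      have h2 : |(fun u => p.eval u / u ^ n) t⁻¹| * t ^ ((β : ℝ) - n) * t⁻¹ ^ β =
          |p.eval t⁻¹| := by
        simp only [abs_div, abs_of_pos (pow_pos (inv_pos.2 ht0) n)]
        rw [Real.rpow_sub ht0, Real.rpow_natCast, Real.rpow_natCast, inv_pow, inv_pow]
        field_simp
      simp only [Function.comp_apply]
      constructor
      · exact le_of_mul_le_mul_right (h1.1.trans_eq h2.symm) hpos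
      · exact le_of_mul_le_mul_right (h2.le.trans h1.2) hpos)
  have h3 : (β : ℝ) = n := sub_eq_zero.1 this
  exact_mod_cast h3.symm

/-- Along the curve `y = t^ν u` the product of the `Q j` is comparable to `d t^e u^β`. -/
def CurveComparable {r : ℕ} (Q : Fin r → ℝ × ℝ → ℝ) (d e η : ℝ) (β ν : ℕ) (u : ℝ) : Prop :=
  ∀ᶠ t in 𝓝[>] (0 : ℝ), |∏ j, Q j (t, t ^ ν * u) - d * (t ^ e * u ^ β)| ≤
    η * |d| * (t ^ e * u ^ β)

lemma tendsto_weighted_curve {ν : ℕ} (hν : ν ≠ 0) (u : ℝ) :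
    Tendsto (fun t : ℝ => (t, t ^ ν * u)) (𝓝[>] 0) (𝓝 (0 : ℝ × ℝ)) := by
  have : Continuous fun t : ℝ => (t, t ^ ν * u) := by fun_prop
  exact (this.tendsto' 0 0 (by simp [zero_pow hν])).mono_left nhdsWithin_le_nhds

namespace NewtonExpansion

lemma tendsto_quotient {Q : ℝ × ℝ → ℝ} {B : ℕ} (E : NewtonExpansion Q B) {ν : ℕ} (hν : ν ≠ 0)
    (A : ℕ) (u : ℝ) :
    Tendsto (fun t => E.quotient ν A (t, u)) (𝓝[>] 0) (𝓝 (E.quotient ν A (0, u))) := by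
  have h1 := (E.analyticAt_quotient hν A u).continuousAt
  have h2 : Tendsto (fun t : ℝ => (t, u)) (𝓝[>] 0) (𝓝 (0, u)) :=
    ((continuous_id.prodMk continuous_const).tendsto 0).mono_left nhdsWithin_le_nhds
  exact h1.tendsto.comp h2

variable {r B : ℕ} {Q : Fin r → ℝ × ℝ → ℝ} (E : ∀ j, NewtonExpansion (Q j) B)

lemma exists_weight_lt {d e η u : ℝ} {β ν : ℕ} (hd : d ≠ 0) (hη : η < 1) (hν : ν ≠ 0)
    (hu : 0 < u) (hQ : ∀ j, AnalyticAt ℝ (Q j) 0) (hB : e < ν * B)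
    (hT : CurveComparable Q d e η β ν u) (j : Fin r) :
    ∃ k ∈ (E j).s, (E j).o k + ν * k < ν * B := by
  classical
  by_contra! hcon
  have hlim : Tendsto (fun t => t ^ (((ν * B : ℕ) : ℝ) - e) * (E j).quotient ν (ν * B) (t, u) *
      ∏ i ∈ Finset.univ.erase j, Q i (t, t ^ ν * u)) (𝓝[>] 0)
      (𝓝 (0 * (E j).quotient ν (ν * B) (0, u) * ∏ i ∈ Finset.univ.erase j, Q i 0)) := by
    refine ((tendsto_rpow_nhdsGT_zero (by push_cast; linarith)).mul
      ((E j).tendsto_quotient hν _ u)).mul (tendsto_finsetProd _ fun i _ => ?_)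
    exact (hQ i).continuousAt.tendsto.comp (tendsto_weighted_curve hν u)
  rw [zero_mul, zero_mul] at hlim
  have hpos : 0 < (1 - η) * |d| * u ^ β :=
    mul_pos (mul_pos (by linarith) (abs_pos.2 hd)) (pow_pos hu β)
  have := ge_of_tendsto (b := (1 - η) * |d| * u ^ β) hlim.abs (by
    filter_upwards [hT, (tendsto_weighted_curve hν u).eventually (E j).eventually_mem_domain,
      self_mem_nhdsWithin] with t ht hdom ht0
    have ht0 : 0 < t := ht0
    have h1 := (bounds_of_abs_sub_le ht (mul_nonneg (Real.rpow_nonneg ht0.le e)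
      (pow_nonneg hu.le β))).1
    rw [← Finset.mul_prod_erase _ _ (Finset.mem_univ j),
      (E j).eq_pow_mul_quotient hcon le_rfl hdom, pow_eq_rpow_mul_rpow ht0 (ν * B) e] at h1
    refine le_of_mul_le_mul_left ?_ (Real.rpow_pos_of_pos ht0 e)
    rw [← abs_of_pos (Real.rpow_pos_of_pos ht0 e), ← abs_mul, abs_of_pos (Real.rpow_pos_of_pos ht0 e)]
    refine le_trans (le_of_eq ?_) (h1.trans (le_of_eq ?_))
    · ring
    · congr 1
      ring)
  rw [abs_zero] at this
  linarith

lemma prod_face_comparable {d e η : ℝ} {β ν : ℕ} (hd : d ≠ 0) (hη : η < 1) (hν : ν ≠ 0)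
    {J : Set ℝ} (hJ : J.Infinite) (hJ0 : ∀ u ∈ J, 0 < u) {A : Fin r → ℕ}
    (hA : ∀ j, ∀ k ∈ (E j).s, A j ≤ (E j).o k + ν * k)
    (hA' : ∀ j, ∃ k ∈ (E j).s, (E j).o k + ν * k = A j) (hB : ∀ j, A j < ν * B)
    (hT : ∀ u ∈ J, CurveComparable Q d e η β ν u) :
    ∀ u ∈ J, |(∏ j, (E j).face ν (A j)).eval u - d * u ^ β| ≤ η * |d| * u ^ β := by
  have hface : ∏ j, (E j).face ν (A j) ≠ 0 := Finset.prod_ne_zero_iff.2 fun j _ => by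
    obtain ⟨k, hk, h⟩ := hA' j
    exact (E j).face_ne_zero hk h
  have hlim : ∀ u, Tendsto (fun t => ∏ j, (E j).quotient ν (A j) (t, u)) (𝓝[>] 0)
      (𝓝 ((∏ j, (E j).face ν (A j)).eval u)) := fun u => by
    rw [Polynomial.eval_prod]
    refine tendsto_finsetProd _ fun j _ => ?_
    rw [← (E j).quotient_zero (hA j) (hB j)]
    exact (E j).tendsto_quotient hν _ u
  have hprod : ∀ u, ∀ᶠ t in 𝓝[>] (0 : ℝ), ∏ j, Q j (t, t ^ ν * u) =
      t ^ (∑ j, A j) * ∏ j, (E j).quotient ν (A j) (t, u) := fun u => by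
    have : ∀ᶠ t in 𝓝[>] (0 : ℝ), ∀ j, (t, t ^ ν * u) ∈ (E j).domain := eventually_all.2 fun j =>
      (tendsto_weighted_curve hν u).eventually (E j).eventually_mem_domain
    filter_upwards [this] with t ht
    rw [← Finset.prod_pow_eq_pow_sum, ← Finset.prod_mul_distrib]
    exact Finset.prod_congr rfl fun j _ => (E j).eq_pow_mul_quotient (hA j) (hB j).le (ht j)
  have hsum : ((∑ j, A j : ℕ) : ℝ) - e = 0 := by
    obtain ⟨u, huJ, hu⟩ : ∃ u ∈ J, (∏ j, (E j).face ν (A j)).eval u ≠ 0 := by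
      by_contra! hcon
      exact hface (Polynomial.eq_zero_of_infinite_isRoot _ (hJ.mono hcon))
    have hu0 := hJ0 u huJ
    refine exponent_eq_zero (κ := (1 - η) * |d| * u ^ β) (κ' := (1 + η) * |d| * u ^ β) (hlim u) hu
      (mul_pos (mul_pos (by linarith) (abs_pos.2 hd)) (pow_pos hu0 β)) ?_
    filter_upwards [hT u huJ, hprod u, self_mem_nhdsWithin] with t ht hp ht0
    have ht0 : 0 < t := ht0
    have hpos := Real.rpow_pos_of_pos ht0 e
    have h1 := bounds_of_abs_sub_le ht (mul_nonneg hpos.le (pow_nonneg hu0.le β))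
    rw [hp, abs_mul, abs_of_pos (pow_pos ht0 _), pow_eq_rpow_mul_rpow ht0 _ e] at h1
    constructor
    · refine le_of_mul_le_mul_left ?_ hpos
      refine le_trans (le_of_eq ?_) (h1.1.trans (le_of_eq ?_)) <;> ring
    · refine le_of_mul_le_mul_left ?_ hpos
      refine le_trans (le_of_eq ?_) (h1.2.trans (le_of_eq ?_)) <;> ring
  intro u huJ
  refine le_of_tendsto ((hlim u).sub_const _).abs ?_
  filter_upwards [hT u huJ, hprod u, self_mem_nhdsWithin] with t ht hp ht0
  have ht0 : 0 < t := ht0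
  have hpos := Real.rpow_pos_of_pos ht0 e
  rw [hp, pow_eq_rpow_mul_rpow ht0 _ e, hsum, Real.rpow_zero, mul_one, mul_left_comm d,
    ← mul_sub, abs_mul, abs_of_pos hpos] at ht
  refine le_of_mul_le_mul_left (ht.trans_eq ?_) hpos
  ring

end NewtonExpansion

lemma Polynomial.eval_ne_zero_of_comparable_on_closure {p : Polynomial ℝ} {d η : ℝ} (hd : d ≠ 0)
    (hη : η < 1) {β : ℕ} {J : Set ℝ}
    (h : ∀ u ∈ J, |p.eval u - d * u ^ β| ≤ η * |d| * u ^ β) {u : ℝ} (hu : u ∈ closure J)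
    (hu0 : 0 < u) : p.eval u ≠ 0 := by
  have hcl : closure J ⊆ {u | |p.eval u - d * u ^ β| ≤ η * |d| * u ^ β} :=
    closure_minimal h (isClosed_le
      (((p.continuous.sub (continuous_const.mul (continuous_pow β)))).abs)
      (continuous_const.mul (continuous_pow β)))
  have h1 := (bounds_of_abs_sub_le (hcl hu) (pow_nonneg hu0.le β)).1
  have h2 : 0 < (1 - η) * |d| * u ^ β :=
    mul_pos (mul_pos (by linarith) (abs_pos.2 hd)) (pow_pos hu0 β)
  exact abs_pos.1 (h2.trans_le h1)

namespace NewtonExpansion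

lemma exists_min_weight {Q : ℝ × ℝ → ℝ} {B : ℕ} (E : NewtonExpansion Q B) (hs : E.s.Nonempty)
    (ν : ℕ) : ∃ A, (∀ k ∈ E.s, A ≤ E.o k + ν * k) ∧ ∃ k ∈ E.s, E.o k + ν * k = A := by
  obtain ⟨k, hk, h⟩ := Finset.exists_min_image E.s (fun k => E.o k + ν * k) hs
  exact ⟨_, h, k, hk, rfl⟩

variable {r B : ℕ} {Q : Fin r → ℝ × ℝ → ℝ} (E : ∀ j, NewtonExpansion (Q j) B)

/-- The index `b j` is the lower end of the face of weight `n` of the Newton polygon of `Q j`. -/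
structure LowerVertex (n : ℕ) (H : ℝ) (β : ℕ) (b : Fin r → ℕ) : Prop where
  mem : ∀ j, b j ∈ (E j).s
  le : ∀ j, ∀ k ∈ (E j).s, (E j).o (b j) + n * b j ≤ (E j).o k + n * k
  lt : ∀ j, (E j).o (b j) + n * b j < n * B
  face_ne : ∀ j, ∀ u ∈ Ioc 0 H, ((E j).face n ((E j).o (b j) + n * b j)).eval u ≠ 0
  sum_eq : ∑ j, b j = β

lemma exists_lowerVertex {d e η H : ℝ} {β n : ℕ} (hd : d ≠ 0) (hη : η < 1) (hn : n ≠ 0)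
    (hH : 0 < H) (hQ : ∀ j, AnalyticAt ℝ (Q j) 0) (hB : e < n * B)
    (hT : ∀ u ∈ Ioo 0 H, CurveComparable Q d e η β n u) :
    ∃ b, LowerVertex E n H β b := by
  have hlt := exists_weight_lt E hd hη hn (half_pos hH) hQ hB
    (hT (H / 2) ⟨half_pos hH, half_lt_self hH⟩)
  have hmin := fun j => (E j).exists_min_weight
    ⟨(hlt j).choose, (hlt j).choose_spec.1⟩ n
  choose A hA hA' using hmin
  have hAB : ∀ j, A j < n * B := fun j => by
    obtain ⟨k, hk, h⟩ := hlt j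
    exact (hA j k hk).trans_lt h
  have hcomp := prod_face_comparable E hd hη hn (Ioo_infinite hH) (fun u hu => hu.1) hA hA' hAB hT
  have hface : ∀ j, (E j).face n (A j) ≠ 0 := fun j => by
    obtain ⟨k, hk, h⟩ := hA' j
    exact (E j).face_ne_zero hk h
  have hb := fun j => (E j).mem_of_coeff_face_ne_zero
    (k := ((E j).face n (A j)).natTrailingDegree)
    (fun h0 => hface j (Polynomial.trailingCoeff_eq_zero.1 h0))
  refine ⟨fun j => ((E j).face n (A j)).natTrailingDegree, fun j => (hb j).1, ?_, ?_, ?_, ?_⟩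
  · intro j k hk
    rw [(hb j).2]
    exact hA j k hk
  · intro j
    rw [(hb j).2]
    exact hAB j
  · intro j u hu
    rw [(hb j).2]
    have h := Polynomial.eval_ne_zero_of_comparable_on_closure hd hη hcomp (u := u)
      (by rw [closure_Ioo hH.ne]; exact ⟨hu.1.le, hu.2⟩) hu.1
    rw [Polynomial.eval_prod] at h
    exact Finset.prod_ne_zero_iff.1 h j (Finset.mem_univ j)
  · rw [← Polynomial.natTrailingDegree_prod_of_ne_zero _ _ fun j _ => hface j]
    exact Polynomial.natTrailingDegree_eq_of_comparable
      (Finset.prod_ne_zero_iff.2 fun j _ => hface j) hd hη hH hcomp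

variable {E}

/-- If the product is comparable to a monomial also along curves of larger weight `ν`, then the
lower vertices for the weight `n` are the upper vertices for the weight `ν`. -/
lemma LowerVertex.of_larger_weight {n : ℕ} {H : ℝ} {β : ℕ} {b : Fin r → ℕ}
    (hb : LowerVertex E n H β b) {d e η h : ℝ} {ν : ℕ} (hν : n < ν) (hh : 0 ≤ h) (hd : d ≠ 0)
    (hη : η < 1) (hT : ∀ u ∈ Ioi h, CurveComparable Q d e η β ν u) :
    (∀ j, ∀ k ∈ (E j).s, (E j).o (b j) + ν * b j ≤ (E j).o k + ν * k) ∧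
    (∀ j, (E j).o (b j) + ν * b j < ν * B) ∧
    ∀ j, ∀ u ∈ Ici h, 0 < u → ((E j).face ν ((E j).o (b j) + ν * b j)).eval u ≠ 0 := by
  have hmin := fun j => (E j).exists_min_weight ⟨b j, hb.mem j⟩ ν
  choose A hA hA' using hmin
  have hbB : ∀ j, (E j).o (b j) + ν * b j < ν * B := fun j => by
    have h1 := hb.lt j
    have h2 : b j < B := (E j).lt _ (hb.mem j)
    obtain ⟨c, rfl⟩ := Nat.exists_eq_add_of_lt hν
    nlinarith
  have hAB : ∀ j, A j < ν * B := fun j => (hA j _ (hb.mem j)).trans_lt (hbB j)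
  have hcomp := prod_face_comparable E hd hη (Nat.ne_zero_of_lt hν) (Ioi_infinite h)
    (fun u hu => hh.trans_lt hu) hA hA' hAB hT
  have hface : ∀ j, (E j).face ν (A j) ≠ 0 := fun j => by
    obtain ⟨k, hk, h⟩ := hA' j
    exact (E j).face_ne_zero hk h
  have hc := fun j => (E j).mem_of_coeff_face_ne_zero
    (k := ((E j).face ν (A j)).natDegree)
    (fun h0 => hface j (Polynomial.leadingCoeff_eq_zero.1 h0))
  have hsum : ∑ j, ((E j).face ν (A j)).natDegree = ∑ j, b j := by
    rw [hb.sum_eq, ← Polynomial.natDegree_prod _ _ fun j _ => hface j]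
    exact Polynomial.natDegree_eq_of_comparable
      (Finset.prod_ne_zero_iff.2 fun j _ => hface j) hd hη hcomp
  have hle : ∀ j ∈ Finset.univ, ((E j).face ν (A j)).natDegree ≤ b j := fun j _ => by
    have h1 := hb.le j _ (hc j).1
    have h2 := hA j _ (hb.mem j)
    rw [← (hc j).2] at h2
    obtain ⟨c, rfl⟩ := Nat.exists_eq_add_of_lt hν
    by_contra! hlt
    nlinarith
  have heq : ∀ j, ((E j).face ν (A j)).natDegree = b j := fun j =>
    (Finset.sum_eq_sum_iff_of_le hle).1 hsum j (Finset.mem_univ j)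
  have hAb : ∀ j, (E j).o (b j) + ν * b j = A j := fun j => by
    have := (hc j).2
    rwa [heq j] at this
  refine ⟨fun j k hk => (hAb j).trans_le (hA j k hk), hbB, fun j u hu hu0 => ?_⟩
  rw [hAb j]
  have h := Polynomial.eval_ne_zero_of_comparable_on_closure hd hη hcomp (u := u)
    (by rw [closure_Ioi]; exact hu) hu0
  rw [Polynomial.eval_prod] at h
  exact Finset.prod_ne_zero_iff.1 h j (Finset.mem_univ j)

end NewtonExpansion

lemma analyticAt_rpow_const {x : ℝ} (hx : x ≠ 0) (a : ℝ) : AnalyticAt ℝ (fun x : ℝ => x ^ a) x :=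
  (Real.contDiffAt_rpow_const_of_ne (n := ⊤) hx).analyticAt

section Euler

variable {E : Type*} [NormedAddCommGroup E] [NormedSpace ℝ E]

/-- The operator `Φ ↦ a Φ + dΦ(Λ z)`, which describes the derivative of `x^a Φ(γ(x))` along a curve
with `x γ'(x) = Λ γ(x)`. -/
noncomputable def eulerOp (Λ : E →L[ℝ] E) (a : ℝ) (Φ : E → ℝ) (z : E) : ℝ :=
  a * Φ z + fderiv ℝ Φ z (Λ z)

/-- The composition of the operators `eulerOp Λ a`, `eulerOp Λ (a - 1)`, …, `l` of them. -/
noncomputable def eulerIter (Λ : E →L[ℝ] E) : ℝ → ℕ → (E → ℝ) → E → ℝ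
  | _, 0, Φ => Φ
  | a, l + 1, Φ => eulerIter Λ (a - 1) l (eulerOp Λ a Φ)

lemma AnalyticAt.eulerOp {Λ : E →L[ℝ] E} {a : ℝ} {Φ : E → ℝ} {z : E} (h : AnalyticAt ℝ Φ z) :
    AnalyticAt ℝ (eulerOp Λ a Φ) z :=
  (analyticAt_const.mul h).add <| AnalyticAt.fun_comp (f := fun z => (fderiv ℝ Φ z, Λ z))
    ((ContinuousLinearMap.id ℝ (E →L[ℝ] ℝ)).analyticAt_bilinear _)
    (h.fderiv.prod (Λ.analyticAt z))

lemma AnalyticAt.eulerIter {Λ : E →L[ℝ] E} {a : ℝ} {Φ : E → ℝ} {z : E} (h : AnalyticAt ℝ Φ z)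
    (l : ℕ) : AnalyticAt ℝ (eulerIter Λ a l Φ) z := by
  induction l generalizing a Φ with
  | zero => exact h
  | succ l ih => exact ih h.eulerOp

lemma descProd_succ (a : ℝ) (l : ℕ) : descProd a (l + 1) = a * descProd (a - 1) l := by
  rw [descProd, descProd, Finset.prod_range_succ', mul_comm]
  congr 1
  · simp
  · refine Finset.prod_congr rfl fun j _ => ?_
    push_cast
    ring

lemma eulerIter_of_fixed {Λ : E →L[ℝ] E} {z : E} (hz : Λ z = 0) (a : ℝ) (l : ℕ) (Φ : E → ℝ) :
    eulerIter Λ a l Φ z = descProd a l * Φ z := by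
  induction l generalizing a Φ with
  | zero => simp [eulerIter, descProd]
  | succ l ih =>
    rw [eulerIter, ih, descProd_succ, eulerOp, hz, map_zero]
    ring

lemma iteratedDeriv_rpow_mul_comp {Λ : E →L[ℝ] E} {f : ℝ → ℝ} {γ : ℝ → E} {C a x : ℝ}
    {Φ : E → ℝ} (hx : 0 < x)
    (h : ∀ᶠ x' in 𝓝 x, f x' = C * x' ^ a * Φ (γ x') ∧ AnalyticAt ℝ Φ (γ x') ∧
      HasDerivAt γ (x'⁻¹ • Λ (γ x')) x') (l : ℕ) :
    iteratedDeriv l f x = C * x ^ (a - l) * eulerIter Λ a l Φ (γ x) := by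
  induction l generalizing f a Φ with
  | zero => simpa [eulerIter] using h.self_of_nhds.1
  | succ l ih =>
    rw [iteratedDeriv_succ', ih (a := a - 1) (Φ := eulerOp Λ a Φ)]
    · push_cast
      rw [eulerIter, sub_sub, add_comm (1 : ℝ)]
    · filter_upwards [h.eventually_nhds, lt_mem_nhds hx] with y hy hy0
      obtain ⟨-, han, hγ⟩ := hy.self_of_nhds
      refine ⟨?_, han.eulerOp, hγ⟩
      have h1 : HasDerivAt (fun x' => C * x' ^ a * Φ (γ x'))
          (C * (a * y ^ (a - 1)) * Φ (γ y) +
            C * y ^ a * fderiv ℝ Φ (γ y) (y⁻¹ • Λ (γ y))) y :=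
        ((Real.hasDerivAt_rpow_const (Or.inl hy0.ne')).const_mul C).mul
          (han.differentiableAt.hasFDerivAt.comp_hasDerivAt y hγ)
      have h2 : f =ᶠ[𝓝 y] fun x' => C * x' ^ a * Φ (γ x') := hy.mono fun _ h => h.1
      rw [h2.deriv_eq, h1.deriv, eulerOp, map_smul, smul_eq_mul, Real.rpow_sub_one hy0.ne']
      ring

lemma pderiv2_eq_eulerIter {Λ₁ Λ₂ : E →L[ℝ] E} {F : ℝ × ℝ → ℝ} {ζ : ℝ × ℝ → E} {Φ : E → ℝ}
    {p : ℝ × ℝ} {α : ℝ} {β : ℕ} (hp : 0 < p.1)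
    (hF : ∀ᶠ q in 𝓝 p, F q = q.1 ^ α * q.2 ^ β * Φ (ζ q) ∧ AnalyticAt ℝ Φ (ζ q))
    (hx : ∀ᶠ q in 𝓝 p, HasDerivAt (fun x => ζ (x, q.2)) (q.1⁻¹ • Λ₁ (ζ q)) q.1)
    (hy : 0 < β → 0 < p.2 ∧
      ∀ᶠ q in 𝓝 p, HasDerivAt (fun y => ζ (q.1, y)) (q.2⁻¹ • Λ₂ (ζ q)) q.2)
    (l : ℕ) {m : ℕ} (hm : m ≤ β) :
    pderiv2 l m F p = p.1 ^ (α - l) * p.2 ^ (β - m) *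
      eulerIter Λ₁ α l (eulerIter Λ₂ β m Φ) (ζ p) := by
  have hinner : ∀ᶠ x in 𝓝 p.1, iteratedDeriv m (fun y => F (x, y)) p.2 =
      p.2 ^ (β - m) * x ^ α * eulerIter Λ₂ β m Φ (ζ (x, p.2)) := by
    rcases Nat.eq_zero_or_pos m with rfl | hm0
    · have : Tendsto (fun x : ℝ => (x, p.2)) (𝓝 p.1) (𝓝 p) :=
        (continuous_id.prodMk continuous_const).tendsto' _ _ rfl
      filter_upwards [this.eventually hF] with x hx
      simp only [iteratedDeriv_zero, hx.1, eulerIter, Nat.sub_zero]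
      ring
    · obtain ⟨hp2, hy⟩ := hy (hm0.trans_le hm)
      have h := hF.and hy
      rw [← Prod.mk.eta (p := p), nhds_prod_eq] at h
      filter_upwards [h.curry] with x hx
      have := iteratedDeriv_rpow_mul_comp (Λ := Λ₂) (f := fun y => F (x, y))
        (γ := fun y => ζ (x, y)) (C := x ^ α) (a := (β : ℝ)) (Φ := Φ) hp2 (by
          filter_upwards [hx] with y hy
          refine ⟨?_, hy.1.2, hy.2⟩
          rw [hy.1.1, Real.rpow_natCast]) m
      rw [this, ← Nat.cast_sub hm, Real.rpow_natCast]
      ring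
  have hslice : Tendsto (fun x : ℝ => (x, p.2)) (𝓝 p.1) (𝓝 p) :=
    (continuous_id.prodMk continuous_const).tendsto' _ _ rfl
  rw [pderiv2, iteratedDeriv_rpow_mul_comp (Λ := Λ₁) (γ := fun x => ζ (x, p.2))
    (C := p.2 ^ (β - m)) (a := α) (Φ := eulerIter Λ₂ β m Φ) hp]
  · ring
  · filter_upwards [hinner, hslice.eventually hF, hslice.eventually hx] with x h1 h2 h3
    exact ⟨h1, h2.2.eulerIter m, h3⟩

/-- All derivatives of `x^α y^β Φ(z)` up to order `(α, β)` are relatively close to those of the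
monomial at points where `z` is close to a common zero of `Λ₁` and `Λ₂`. -/
def EulerClose (Λ₁ Λ₂ : E →L[ℝ] E) (Φ : E → ℝ) (α : ℚ) (β : ℕ) (d η : ℝ) (z : E) : Prop :=
  ∀ l : ℕ, (l : ℚ) ≤ α → ∀ m ≤ β,
    |eulerIter Λ₁ α l (eulerIter Λ₂ β m Φ) z - descProd α l * descProd β m * d| ≤ η * |d|

lemma eventually_eulerClose {Λ₁ Λ₂ : E →L[ℝ] E} {Φ : E → ℝ} {z₀ : E} (hΦ : AnalyticAt ℝ Φ z₀)
    (h₁ : Λ₁ z₀ = 0) (h₂ : Λ₂ z₀ = 0) {D : E → ℝ} (hD : ContinuousAt D z₀) (hDΦ : D z₀ = Φ z₀)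
    (hne : Φ z₀ ≠ 0) (α : ℚ) (β : ℕ) {η : ℝ} (hη : 0 < η) :
    ∀ᶠ z in 𝓝 z₀, EulerClose Λ₁ Λ₂ Φ α β (D z) η z := by
  have h : ∀ l ∈ Finset.range (⌊α⌋₊ + 1), ∀ m ∈ Finset.range (β + 1), ∀ᶠ z in 𝓝 z₀,
      |eulerIter Λ₁ α l (eulerIter Λ₂ β m Φ) z - descProd α l * descProd β m * D z| <
        η * |D z| := by
    intro l _ m _
    have hc : ContinuousAt (fun z => |eulerIter Λ₁ α l (eulerIter Λ₂ β m Φ) z -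
        descProd α l * descProd β m * D z|) z₀ :=
      (((hΦ.eulerIter m).eulerIter l).continuousAt.sub (continuousAt_const.mul hD)).abs
    refine hc.eventually_lt (continuousAt_const.mul hD.abs) ?_
    rw [eulerIter_of_fixed h₁, eulerIter_of_fixed h₂, hDΦ, mul_assoc, sub_self, abs_zero]
    exact mul_pos hη (abs_pos.2 hne)
  have h' := (Finset.eventually_all _).2 fun l hl => (Finset.eventually_all _).2 (h l hl)
  filter_upwards [h'] with z hz l hl m hm
  refine (hz l ?_ m ?_).le
  · rw [Finset.mem_range, Nat.lt_succ_iff]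
    exact Nat.le_floor (by exact_mod_cast hl)
  · exact Finset.mem_range.2 (Nat.lt_succ_of_le hm)

lemma monomialOn_of_eulerClose {Λ₁ Λ₂ : E →L[ℝ] E} {F : ℝ × ℝ → ℝ} {ζ : ℝ × ℝ → E} {Φ : E → ℝ}
    {D : Set (ℝ × ℝ)} {α : ℚ} {β : ℕ} {d η : ℝ} (hpos : ∀ p ∈ D, 0 < p.1)
    (hpos' : 0 < β → ∀ p ∈ D, 0 < p.2) (hζ : ∀ p ∈ D, AnalyticAt ℝ ζ p)
    (hF : ∀ p ∈ D, ∀ᶠ q in 𝓝 p,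
      F q = q.1 ^ (α : ℝ) * q.2 ^ β * Φ (ζ q) ∧ AnalyticAt ℝ Φ (ζ q))
    (hx : ∀ p ∈ D, ∀ᶠ q in 𝓝 p, HasDerivAt (fun x => ζ (x, q.2)) (q.1⁻¹ • Λ₁ (ζ q)) q.1)
    (hy : 0 < β → ∀ p ∈ D,
      ∀ᶠ q in 𝓝 p, HasDerivAt (fun y => ζ (q.1, y)) (q.2⁻¹ • Λ₂ (ζ q)) q.2)
    (hclose : ∀ p ∈ D, EulerClose Λ₁ Λ₂ Φ α β d η (ζ p)) : MonomialOn F D α β d η := by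
  intro p hp
  have hp1 := hpos p hp
  constructor
  · have h1 : AnalyticAt ℝ (fun q : ℝ × ℝ => q.1 ^ (α : ℝ)) p :=
      AnalyticAt.fun_comp (f := fun q : ℝ × ℝ => q.1) (g := fun x : ℝ => x ^ (α : ℝ))
        (analyticAt_rpow_const hp1.ne' _) analyticAt_fst
    have h2 : AnalyticAt ℝ (fun q : ℝ × ℝ => q.1 ^ (α : ℝ) * q.2 ^ β * Φ (ζ q)) p :=
      (h1.mul (analyticAt_snd.pow β)).mul ((hF p hp).self_of_nhds.2.fun_comp (hζ p hp))
    exact h2.congr ((hF p hp).mono fun q hq => hq.1.symm)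
  · intro l hl m hm
    rw [pderiv2_eq_eulerIter hp1 (hF p hp) (hx p hp)
      (fun hβ => ⟨hpos' hβ p hp, hy hβ p hp⟩) l hm]
    have hw : 0 ≤ p.1 ^ ((α : ℝ) - l) * p.2 ^ (β - m) := by
      refine mul_nonneg (Real.rpow_nonneg hp1.le _) ?_
      rcases Nat.eq_zero_or_pos β with rfl | hβ
      · simp
      · exact pow_nonneg (hpos' hβ p hp).le _
    have h := mul_le_mul_of_nonneg_left (hclose p hp l hl m hm) hw
    rw [← abs_of_nonneg hw, ← abs_mul, abs_of_nonneg hw] at h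
    refine le_trans (le_of_eq ?_) (h.trans (le_of_eq ?_))
    · congr 1
      ring
    · ring

end Euler

/-- The diagonal linear map with entries `κ`, `μ`, `ν`. -/
noncomputable def diagMap (κ μ ν : ℝ) : (ℝ × ℝ) × ℝ →L[ℝ] (ℝ × ℝ) × ℝ :=
  ((κ • ContinuousLinearMap.id ℝ ℝ).prodMap (μ • ContinuousLinearMap.id ℝ ℝ)).prodMap
    (ν • ContinuousLinearMap.id ℝ ℝ)

@[simp] lemma diagMap_apply (κ μ ν : ℝ) (z : (ℝ × ℝ) × ℝ) :
    diagMap κ μ ν z = ((κ * z.1.1, μ * z.1.2), ν * z.2) := rfl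

lemma hasDerivAt_rpow_euler {x : ℝ} (hx : 0 < x) (κ C : ℝ) :
    HasDerivAt (fun x : ℝ => C * x ^ κ) (x⁻¹ * (κ * (C * x ^ κ))) x := by
  have := (Real.hasDerivAt_rpow_const (p := κ) (Or.inl hx.ne')).const_mul C
  refine this.congr_deriv ?_
  rw [Real.rpow_sub_one hx.ne']
  ring

lemma root_pow_eq_rpow {N ν : ℕ} (hN : N ≠ 0) {e x : ℝ} (he : (N : ℝ) * e = ν) (hx : 0 ≤ x) :
    (x ^ (N : ℝ)⁻¹) ^ ν = x ^ e := by
  rw [← Real.rpow_natCast, ← Real.rpow_mul hx, ← he, inv_mul_cancel_left₀ (Nat.cast_ne_zero.2 hN)]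

lemma pow_rpow_eq_pow {N ν : ℕ} {e t : ℝ} (he : (N : ℝ) * e = ν) (ht : 0 ≤ t) :
    (t ^ N) ^ e = t ^ ν := by
  rw [← Real.rpow_natCast, ← Real.rpow_mul ht, he, Real.rpow_natCast]

lemma rpow_ratCast_div {N : ℕ} {x : ℝ} (hx : 0 ≤ x) (A : ℕ) :
    x ^ (((A : ℚ) / N : ℚ) : ℝ) = (x ^ (N : ℝ)⁻¹) ^ A := by
  rw [← Real.rpow_natCast, ← Real.rpow_mul hx]
  congr 1
  push_cast
  ring

lemma root_lt_of_lt_pow {N : ℕ} (hN : N ≠ 0) {x ρ : ℝ} (hx : 0 ≤ x) (hρ : 0 ≤ ρ) (h : x < ρ ^ N) :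
    x ^ (N : ℝ)⁻¹ < ρ := by
  have := Real.rpow_lt_rpow hx h (inv_pos.2 (Nat.cast_pos.2 (Nat.pos_of_ne_zero hN)))
  rwa [Real.pow_rpow_inv_natCast hρ hN] at this

/-- The chart `(x, y) ↦ ((x^κ, y x^{-e}), w x^m y⁻¹)`. -/
noncomputable def vertexChart (κ e m w : ℝ) (q : ℝ × ℝ) : (ℝ × ℝ) × ℝ :=
  ((q.1 ^ κ, q.2 * q.1 ^ (-e)), w * q.2⁻¹ * q.1 ^ m)

/-- The chart `(x, y) ↦ ((x^κ, y x^{-e}), c)`. -/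
noncomputable def faceChart (κ e c : ℝ) (q : ℝ × ℝ) : (ℝ × ℝ) × ℝ :=
  ((q.1 ^ κ, q.2 * q.1 ^ (-e)), c)

lemma analyticAt_rpow_fst {q : ℝ × ℝ} (hq : 0 < q.1) (κ : ℝ) :
    AnalyticAt ℝ (fun q : ℝ × ℝ => q.1 ^ κ) q :=
  AnalyticAt.fun_comp (f := fun q : ℝ × ℝ => q.1) (g := fun x : ℝ => x ^ κ)
    (analyticAt_rpow_const hq.ne' κ) analyticAt_fst

lemma analyticAt_faceChart {κ e c : ℝ} {q : ℝ × ℝ} (hq : 0 < q.1) :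
    AnalyticAt ℝ (faceChart κ e c) q :=
  ((analyticAt_rpow_fst hq κ).prod (analyticAt_snd.mul (analyticAt_rpow_fst hq (-e)))).prod
    analyticAt_const

lemma analyticAt_vertexChart {κ e m w : ℝ} {q : ℝ × ℝ} (hq : 0 < q.1) (hq' : 0 < q.2) :
    AnalyticAt ℝ (vertexChart κ e m w) q :=
  ((analyticAt_rpow_fst hq κ).prod (analyticAt_snd.mul (analyticAt_rpow_fst hq (-e)))).prod
    ((analyticAt_const.mul (analyticAt_snd.inv hq'.ne')).mul (analyticAt_rpow_fst hq m))

lemma hasDerivAt_faceChart {κ e c : ℝ} {q : ℝ × ℝ} (hq : 0 < q.1) :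
    HasDerivAt (fun x => faceChart κ e c (x, q.2))
      (q.1⁻¹ • diagMap κ (-e) 0 (faceChart κ e c q)) q.1 := by
  have h1 := hasDerivAt_rpow_euler hq κ 1
  simp only [one_mul] at h1
  have := (h1.prodMk (hasDerivAt_rpow_euler hq (-e) q.2)).prodMk (hasDerivAt_const q.1 c)
  simpa [faceChart] using this

lemma hasDerivAt_vertexChart_fst {κ e m w : ℝ} {q : ℝ × ℝ} (hq : 0 < q.1) :
    HasDerivAt (fun x => vertexChart κ e m w (x, q.2))
      (q.1⁻¹ • diagMap κ (-e) m (vertexChart κ e m w q)) q.1 := by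
  have h1 := hasDerivAt_rpow_euler hq κ 1
  simp only [one_mul] at h1
  have := (h1.prodMk (hasDerivAt_rpow_euler hq (-e) q.2)).prodMk
    (hasDerivAt_rpow_euler hq m (w * q.2⁻¹))
  simpa [vertexChart] using this

lemma hasDerivAt_vertexChart_snd {κ e m w : ℝ} {q : ℝ × ℝ} (hq : 0 < q.2) :
    HasDerivAt (fun y => vertexChart κ e m w (q.1, y))
      (q.2⁻¹ • diagMap 0 1 (-1) (vertexChart κ e m w q)) q.2 := by
  have h1 : HasDerivAt (fun y : ℝ => y * q.1 ^ (-e)) (q.2⁻¹ * (1 * (q.2 * q.1 ^ (-e)))) q.2 := by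
    refine ((hasDerivAt_id q.2).mul_const (q.1 ^ (-e))).congr_deriv ?_
    field_simp
  have h2 : HasDerivAt (fun y : ℝ => w * y⁻¹ * q.1 ^ m)
      (q.2⁻¹ * (-1 * (w * q.2⁻¹ * q.1 ^ m))) q.2 := by
    refine (((hasDerivAt_inv hq.ne').const_mul w).mul_const (q.1 ^ m)).congr_deriv ?_
    field_simp
  have := ((hasDerivAt_const q.2 (q.1 ^ κ)).prodMk h1).prodMk h2
  simpa [vertexChart] using this

namespace NewtonExpansion

variable {Q : ℝ × ℝ → ℝ} {B : ℕ} (E : NewtonExpansion Q B)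

/-- Near a curve `y = c x^e` on which the face polynomial does not vanish, `Q` is comparable to a
power of `x` after the shift by `c x^e`; the size of the neighborhood is locally uniform in `c`. -/
lemma exists_monomialOn_shift {ν A N : ℕ} (hν : ν ≠ 0) (hN : N ≠ 0) {e : ℝ}
    (he : (N : ℝ) * e = ν) (hA : ∀ k ∈ E.s, A ≤ E.o k + ν * k) (hB : A < ν * B) {c₁ c₂ : ℝ}
    (hface : ∀ c ∈ Icc c₁ c₂, (E.face ν A).eval c ≠ 0) {η : ℝ} (hη : 0 < η) {a : ℝ} (ha : 0 < a)
    {F : ℝ × ℝ → ℝ} (hF : ∀ q : ℝ × ℝ, 0 < q.1 → q.1 < a → F q = Q (q.1 ^ (N : ℝ)⁻¹, q.2)) :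
    ∃ ρ > 0, ∀ c ∈ Icc c₁ c₂, MonomialOn (fun q => F (shear 1 (fun x => c * x ^ e) q))
      {q | 0 < q.1 ∧ q.1 < ρ ∧ |q.2| < ρ * q.1 ^ e} ((A : ℚ) / N) 0 ((E.face ν A).eval c) η := by
  set Φ : (ℝ × ℝ) × ℝ → ℝ := fun z => E.quotient ν A (z.1.1, z.2 + z.1.2) with hΦdef
  have hΦ : ∀ c, AnalyticAt ℝ Φ ((0, 0), c) := fun c => by
    refine AnalyticAt.fun_comp (f := fun z : (ℝ × ℝ) × ℝ => (z.1.1, z.2 + z.1.2)) ?_ ?_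
    · simpa using E.analyticAt_quotient hν A c
    · have h1 : AnalyticAt ℝ (fun z : (ℝ × ℝ) × ℝ => z.1) ((0, 0), c) := analyticAt_fst
      exact (AnalyticAt.fun_comp (f := fun z : (ℝ × ℝ) × ℝ => z.1) analyticAt_fst h1).prod
        (analyticAt_snd.add
          (AnalyticAt.fun_comp (f := fun z : (ℝ × ℝ) × ℝ => z.1) analyticAt_snd h1))
  have hΦ0 : ∀ c, Φ ((0, 0), c) = (E.face ν A).eval c := fun c => by
    simp only [hΦdef, add_zero]
    exact E.quotient_zero hA hB c
  have hev : ∀ᶠ w in 𝓝 (0 : ℝ × ℝ), ∀ c ∈ Icc c₁ c₂, AnalyticAt ℝ Φ (w, c) ∧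
      (w.1, w.1 ^ ν * (c + w.2)) ∈ E.domain ∧
      EulerClose (diagMap (N : ℝ)⁻¹ (-e) 0) 0 Φ ((A : ℚ) / N) 0 ((E.face ν A).eval c) η (w, c) := by
    refine isCompact_Icc.eventually_forall_of_forall_eventually fun c hc => ?_
    have h1 : ∀ᶠ z in 𝓝 (((0 : ℝ × ℝ), c) : (ℝ × ℝ) × ℝ), AnalyticAt ℝ Φ z :=
      (hΦ c).eventually_analyticAt
    have h2 : ∀ᶠ z in 𝓝 (((0 : ℝ × ℝ), c) : (ℝ × ℝ) × ℝ),
        (z.1.1, z.1.1 ^ ν * (z.2 + z.1.2)) ∈ E.domain := by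
      have hcont : Continuous fun z : (ℝ × ℝ) × ℝ => (z.1.1, z.1.1 ^ ν * (z.2 + z.1.2)) := by
        fun_prop
      exact (hcont.tendsto' ((0 : ℝ × ℝ), c) 0 (by simp [zero_pow hν])).eventually
        E.eventually_mem_domain
    have h3 := eventually_eulerClose (Λ₁ := diagMap (N : ℝ)⁻¹ (-e) 0) (Λ₂ := 0) (hΦ c)
      (by simp) (by simp) (D := fun z => (E.face ν A).eval z.2)
      ((E.face ν A).continuous.continuousAt.comp continuousAt_snd) (hΦ0 c).symm
      (by rw [hΦ0]; exact hface c hc) ((A : ℚ) / N) 0 hη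
    filter_upwards [h1, h2, h3] with z h1 h2 h3
    exact ⟨h1, h2, h3⟩
  obtain ⟨ρ, hρ, hball⟩ := Metric.eventually_nhds_iff.1 hev
  refine ⟨min ρ (min (ρ ^ N) a), by positivity, fun c hc => ?_⟩
  set D : Set (ℝ × ℝ) := {q | 0 < q.1 ∧ q.1 < min ρ (min (ρ ^ N) a) ∧
    |q.2| < min ρ (min (ρ ^ N) a) * q.1 ^ e}
  have hD : ∀ p ∈ D, ∀ᶠ q in 𝓝 p, 0 < q.1 ∧ q.1 < a ∧
      dist (faceChart (N : ℝ)⁻¹ e c q).1 0 < ρ := by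
    rintro p ⟨h0, h1, h2⟩
    have hc1 : ContinuousAt (fun q => dist (faceChart (N : ℝ)⁻¹ e c q).1 0) p :=
      (continuousAt_fst.comp (analyticAt_faceChart h0).continuousAt).dist continuousAt_const
    refine (continuousAt_fst.eventually (lt_mem_nhds h0)).and
      ((continuousAt_fst.eventually (gt_mem_nhds (h1.trans_le
        ((min_le_right _ _).trans (min_le_right _ _))))).and
      (hc1.eventually (gt_mem_nhds ?_)))
    beta_reduce
    rw [dist_zero_right, faceChart, Prod.norm_def, max_lt_iff]
    have hpos : 0 < p.1 ^ e := Real.rpow_pos_of_pos h0 e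
    constructor
    · rw [Real.norm_eq_abs, abs_of_pos (Real.rpow_pos_of_pos h0 _)]
      exact root_lt_of_lt_pow hN h0.le hρ.le (h1.trans_le
        ((min_le_right _ _).trans (min_le_left _ _)))
    · simp only [Real.norm_eq_abs, abs_mul, Real.rpow_neg h0.le, abs_inv, abs_of_pos hpos]
      rw [← div_eq_mul_inv, div_lt_iff₀ hpos]
      exact h2.trans_le (mul_le_mul_of_nonneg_right (min_le_left _ _) hpos.le)
  refine monomialOn_of_eulerClose (Λ₁ := diagMap (N : ℝ)⁻¹ (-e) 0) (Λ₂ := 0)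
    (ζ := faceChart (N : ℝ)⁻¹ e c) (Φ := Φ) (fun p hp => hp.1) (fun h => absurd h (lt_irrefl 0))
    (fun p hp => analyticAt_faceChart hp.1) ?_ ?_ (fun h => absurd h (lt_irrefl 0)) ?_
  · intro p hp
    filter_upwards [hD p hp] with q hq
    obtain ⟨h1, h2, h3⟩ := hq
    have hgood := hball h3 c hc
    refine ⟨?_, hgood.1⟩
    have hroot := root_pow_eq_rpow (ν := ν) hN he h1.le
    have hpt : shear 1 (fun x => c * x ^ e) q = (q.1, q.1 ^ e * (c + q.2 * q.1 ^ (-e))) := by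
      simp only [shear, Prod.mk.injEq, true_and, Real.rpow_neg h1.le]
      have := (Real.rpow_pos_of_pos h1 e).ne'
      field_simp
      ring
    rw [hpt, hF (q.1, q.1 ^ e * (c + q.2 * q.1 ^ (-e))) h1 h2, rpow_ratCast_div h1.le, pow_zero, mul_one]
    have hdom := hgood.2.1
    simp only [faceChart] at hdom ⊢
    have := E.eq_pow_mul_quotient hA hB.le hdom
    rw [hroot] at this
    exact this
  · intro p hp
    filter_upwards [hD p hp] with q hq
    exact hasDerivAt_faceChart hq.1
  · intro p hp
    exact (hball (hD p hp).self_of_nhds.2.2 c hc).2.2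

/-- The quotient of `Q` by its monomial of index `b`, as a function of `t`, `y / t^n`, `t^n' / y`. -/
noncomputable def vertexQuotient (n n' b : ℕ) (z : (ℝ × ℝ) × ℝ) : ℝ :=
  ∑ k ∈ E.s, (if b ≤ k then z.1.2 ^ (k - b) * z.1.1 ^ (E.o k + n * (k - b) - E.o b)
    else z.2 ^ (b - k) * z.1.1 ^ (E.o k - E.o b - n' * (b - k))) * E.a k z.1.1 +
    z.1.2 ^ (B - b) * z.1.1 ^ (n * (B - b) - E.o b) * E.U (z.1.1, z.1.1 ^ n * z.1.2)

lemma analyticAt_vertexQuotient {n : ℕ} (hn : n ≠ 0) (n' b : ℕ) :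
    AnalyticAt ℝ (E.vertexQuotient n n' b) 0 := by
  have h1 : AnalyticAt ℝ (fun z : (ℝ × ℝ) × ℝ => z.1) 0 := analyticAt_fst
  have ht : AnalyticAt ℝ (fun z : (ℝ × ℝ) × ℝ => z.1.1) 0 :=
    AnalyticAt.fun_comp (f := fun z : (ℝ × ℝ) × ℝ => z.1) analyticAt_fst h1
  have hu : AnalyticAt ℝ (fun z : (ℝ × ℝ) × ℝ => z.1.2) 0 :=
    AnalyticAt.fun_comp (f := fun z : (ℝ × ℝ) × ℝ => z.1) analyticAt_snd h1
  have hv : AnalyticAt ℝ (fun z : (ℝ × ℝ) × ℝ => z.2) 0 := analyticAt_snd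
  have hU : AnalyticAt ℝ (fun z : (ℝ × ℝ) × ℝ => E.U (z.1.1, z.1.1 ^ n * z.1.2)) 0 :=
    AnalyticAt.fun_comp (f := fun z : (ℝ × ℝ) × ℝ => (z.1.1, z.1.1 ^ n * z.1.2))
      (by simpa [zero_pow hn, ← Prod.zero_eq_mk] using E.analyticAt_U)
      (ht.prod ((ht.pow n).mul hu))
  refine AnalyticAt.add (Finset.analyticAt_fun_sum _ fun k hk => AnalyticAt.mul ?_ ?_)
    (((hu.pow _).mul (ht.pow _)).mul hU)
  · split_ifs
    · exact (hu.pow _).mul (ht.pow _)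
    · exact (hv.pow _).mul (ht.pow _)
  · exact AnalyticAt.fun_comp (f := fun z : (ℝ × ℝ) × ℝ => z.1.1) (E.analyticAt_a k hk) ht

lemma vertexQuotient_zero {n n' b : ℕ} (hb : b ∈ E.s) :
    E.vertexQuotient n n' b 0 = E.a b 0 := by
  have hB : B - b ≠ 0 := Nat.sub_ne_zero_of_lt (E.lt b hb)
  rw [vertexQuotient]
  simp only [Prod.fst_zero, Prod.snd_zero, zero_pow hB, zero_mul, add_zero]
  rw [Finset.sum_eq_single b]
  · simp
  · intro k _ hkb
    split_ifs with h
    · rw [zero_pow (by omega), zero_mul, zero_mul]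
    · rw [zero_pow (by omega), zero_mul, zero_mul]
  · exact fun h => absurd hb h

lemma eq_monomial_mul_vertexQuotient {n n' b : ℕ}
    (hle : ∀ k ∈ E.s, E.o b + n * b ≤ E.o k + n * k) (hlt : E.o b + n * b < n * B)
    (hb : b ∈ E.s) {t u v : ℝ}
    (hle' : ∀ k ∈ E.s, k < b → E.o b + n' * b ≤ E.o k + n' * k ∧ t ^ n * u * v = t ^ n')
    (h : (t, t ^ n * u) ∈ E.domain) :
    Q (t, t ^ n * u) = t ^ E.o b * (t ^ n * u) ^ b * E.vertexQuotient n n' b ((t, u), v) := by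
  have hbB := E.lt b hb
  rw [show Q (t, t ^ n * u) = _ from h, vertexQuotient, mul_add, Finset.mul_sum]
  congr 1
  · refine Finset.sum_congr rfl fun k hk => ?_
    simp only
    split_ifs with hbk
    · obtain ⟨i, rfl⟩ := Nat.exists_eq_add_of_le hbk
      have h1 := hle _ hk
      rw [Nat.add_sub_cancel_left]
      have h2 : t ^ E.o b * t ^ (E.o (b + i) + n * i - E.o b) = t ^ E.o (b + i) * (t ^ n) ^ i := by
        rw [← pow_add, Nat.add_sub_cancel' (by nlinarith), pow_add, pow_mul]
      rw [pow_add (t ^ n * u) b i, mul_pow (t ^ n) u i]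
      linear_combination (-((t ^ n * u) ^ b * u ^ i * E.a (b + i) t)) * h2
    · obtain ⟨h1, h3⟩ := hle' k hk (not_le.1 hbk)
      obtain ⟨i, rfl⟩ := Nat.exists_eq_add_of_le (not_le.1 hbk).le
      rw [Nat.add_sub_cancel_left]
      have h4 : E.o (k + i) + n' * i ≤ E.o k := by nlinarith
      have h2 : t ^ E.o (k + i) * ((t ^ n * u * v) ^ i *
          t ^ (E.o k - E.o (k + i) - n' * i)) = t ^ E.o k := by
        rw [h3, ← pow_mul, ← pow_add, ← pow_add]
        congr 1
        omega
      rw [pow_add (t ^ n * u) k i]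
      rw [mul_pow _ v] at h2
      linear_combination (-((t ^ n * u) ^ k * E.a k t)) * h2
  · obtain ⟨i, hi⟩ := Nat.exists_eq_add_of_le hbB.le
    have hob : E.o b ≤ n * i := by
      have : n * B = n * b + n * i := by rw [← mul_add, ← hi]
      omega
    have h2 : t ^ E.o b * t ^ (n * (B - b) - E.o b) = (t ^ n) ^ (B - b) := by
      have : B - b = i := by omega
      rw [this, ← pow_add, Nat.add_sub_cancel' hob, pow_mul]
    have h3 : (t ^ n * u) ^ B = (t ^ n * u) ^ b * ((t ^ n) ^ (B - b) * u ^ (B - b)) := by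
      rw [← mul_pow, ← pow_add, Nat.add_sub_cancel' hbB.le]
    simp only
    rw [h3]
    linear_combination (-((t ^ n * u) ^ b * u ^ (B - b) * E.U (t, t ^ n * u))) * h2

/-- Between the curves `y = K x^m` and `y = δ x^e` determined by the two faces that meet in a vertex
of the Newton polygon, `Q` is comparable to the monomial of this vertex. -/
lemma exists_monomialOn_vertex {n b N : ℕ} (hn : n ≠ 0) (hN : N ≠ 0) {e m ε : ℝ}
    (he : (N : ℝ) * e = n) (hε : 0 ≤ ε) (hb : b ∈ E.s)
    (hle : ∀ k ∈ E.s, E.o b + n * b ≤ E.o k + n * k) (hlt : E.o b + n * b < n * B)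
    (hcase : (∀ k ∈ E.s, b ≤ k) ∨ (ε = 1 ∧ ∃ n' : ℕ, (N : ℝ) * m = n' ∧
      ∀ k ∈ E.s, E.o b + n' * b ≤ E.o k + n' * k)) {η : ℝ} (hη : 0 < η) {a : ℝ} (ha : 0 < a)
    {F : ℝ × ℝ → ℝ} (hF : ∀ q : ℝ × ℝ, 0 < q.1 → q.1 < a → F q = Q (q.1 ^ (N : ℝ)⁻¹, q.2)) :
    ∃ ρ > 0, MonomialOn F {q | 0 < q.1 ∧ q.1 < ρ ∧ 0 < q.2 ∧ q.2 < ρ * q.1 ^ e ∧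
      ε * q.1 ^ m < ρ * q.2} ((E.o b : ℚ) / N) b (E.a b 0) η := by
  obtain ⟨n', hn'⟩ : ∃ n' : ℕ, ∀ k ∈ E.s, k < b →
      E.o b + n' * b ≤ E.o k + n' * k ∧ ε = 1 ∧ (N : ℝ) * m = n' := by
    rcases hcase with h | ⟨h1, n', h2, h3⟩
    · exact ⟨0, fun k hk hkb => absurd (h k hk) (not_le.2 hkb)⟩
    · exact ⟨n', fun k hk _ => ⟨h3 k hk, h1, h2⟩⟩
  set Φ := E.vertexQuotient n n' b
  have hΦ : AnalyticAt ℝ Φ 0 := E.analyticAt_vertexQuotient hn n' b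
  have hΦ0 : Φ 0 = E.a b 0 := E.vertexQuotient_zero hb
  have h2 : ∀ᶠ z in 𝓝 (0 : (ℝ × ℝ) × ℝ), (z.1.1, z.1.1 ^ n * z.1.2) ∈ E.domain := by
    have hcont : Continuous fun z : (ℝ × ℝ) × ℝ => (z.1.1, z.1.1 ^ n * z.1.2) := by
      fun_prop
    exact (hcont.tendsto' 0 0 (by simp [← Prod.zero_eq_mk])).eventually E.eventually_mem_domain
  have h3 := eventually_eulerClose (Λ₁ := diagMap (N : ℝ)⁻¹ (-e) m) (Λ₂ := diagMap 0 1 (-1)) hΦ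
    (map_zero _) (map_zero _) (D := fun _ => E.a b 0) continuousAt_const hΦ0.symm
    (by rw [hΦ0]; exact E.a_ne b hb) ((E.o b : ℚ) / N) b hη
  obtain ⟨ρ, hρ, hball⟩ := Metric.eventually_nhds_iff.1 (hΦ.eventually_analyticAt.and (h2.and h3))
  refine ⟨min ρ (min (ρ ^ N) a), by positivity, ?_⟩
  set D : Set (ℝ × ℝ) := {q | 0 < q.1 ∧ q.1 < min ρ (min (ρ ^ N) a) ∧ 0 < q.2 ∧
    q.2 < min ρ (min (ρ ^ N) a) * q.1 ^ e ∧ ε * q.1 ^ m < min ρ (min (ρ ^ N) a) * q.2}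
  have hD : ∀ p ∈ D, ∀ᶠ q in 𝓝 p, 0 < q.1 ∧ 0 < q.2 ∧ q.1 < a ∧
      dist (vertexChart (N : ℝ)⁻¹ e m ε q) 0 < ρ := by
    rintro p ⟨h0, h1, h2, h3, h4⟩
    have hc1 : ContinuousAt (fun q => dist (vertexChart (N : ℝ)⁻¹ e m ε q) 0) p :=
      (analyticAt_vertexChart h0 h2).continuousAt.dist continuousAt_const
    refine (continuousAt_fst.eventually (lt_mem_nhds h0)).and
      ((continuousAt_snd.eventually (lt_mem_nhds h2)).and
      ((continuousAt_fst.eventually (gt_mem_nhds (h1.trans_le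
        ((min_le_right _ _).trans (min_le_right _ _))))).and
      (hc1.eventually (gt_mem_nhds ?_))))
    beta_reduce
    rw [dist_zero_right, vertexChart, Prod.norm_def, Prod.norm_def, max_lt_iff, max_lt_iff]
    have hpos : 0 < p.1 ^ e := Real.rpow_pos_of_pos h0 e
    refine ⟨⟨?_, ?_⟩, ?_⟩
    · rw [Real.norm_eq_abs, abs_of_pos (Real.rpow_pos_of_pos h0 _)]
      exact root_lt_of_lt_pow hN h0.le hρ.le (h1.trans_le
        ((min_le_right _ _).trans (min_le_left _ _)))
    · simp only [Real.norm_eq_abs, abs_mul, Real.rpow_neg h0.le, abs_inv, abs_of_pos hpos,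
        abs_of_pos h2]
      rw [← div_eq_mul_inv, div_lt_iff₀ hpos]
      exact h3.trans_le (mul_le_mul_of_nonneg_right (min_le_left _ _) hpos.le)
    · simp only [Real.norm_eq_abs, abs_mul, abs_inv, abs_of_pos (Real.rpow_pos_of_pos h0 m),
        abs_of_pos h2, abs_of_nonneg hε]
      rw [mul_right_comm, ← div_eq_mul_inv, div_lt_iff₀ h2]
      exact h4.trans_le (mul_le_mul_of_nonneg_right (min_le_left _ _) h2.le)
  refine monomialOn_of_eulerClose (Λ₁ := diagMap (N : ℝ)⁻¹ (-e) m) (Λ₂ := diagMap 0 1 (-1))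
    (ζ := vertexChart (N : ℝ)⁻¹ e m ε) (Φ := Φ) (fun p hp => hp.1) (fun _ p hp => hp.2.2.1)
    (fun p hp => analyticAt_vertexChart hp.1 hp.2.2.1) ?_ ?_ ?_ ?_
  · intro p hp
    filter_upwards [hD p hp] with q hq
    obtain ⟨h1, h2, h3, h4⟩ := hq
    have hgood := hball h4
    refine ⟨?_, hgood.1⟩
    have hroot := root_pow_eq_rpow (ν := n) hN he h1.le
    have hy : (q.1 ^ (N : ℝ)⁻¹) ^ n * (q.2 * q.1 ^ (-e)) = q.2 := by
      rw [hroot, Real.rpow_neg h1.le]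
      have := (Real.rpow_pos_of_pos h1 e).ne'
      field_simp
    rw [hF _ h1 h3, rpow_ratCast_div h1.le]
    have := E.eq_monomial_mul_vertexQuotient (n := n) (n' := n') hle hlt hb
      (t := q.1 ^ (N : ℝ)⁻¹) (u := q.2 * q.1 ^ (-e)) (v := ε * q.2⁻¹ * q.1 ^ m) (fun k hk hkb => by
        obtain ⟨g1, g2, g3⟩ := hn' k hk hkb
        refine ⟨g1, ?_⟩
        rw [hy, g2, root_pow_eq_rpow (ν := n') hN g3 h1.le]
        field_simp) hgood.2.1
    rw [hy] at this
    exact this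
  · intro p hp
    filter_upwards [hD p hp] with q hq
    exact hasDerivAt_vertexChart_fst hq.1
  · intro _ p hp
    filter_upwards [hD p hp] with q hq
    exact hasDerivAt_vertexChart_snd hq.2.1
  · intro p hp
    exact (hball (hD p hp).self_of_nhds.2.2.2).2.2

end NewtonExpansion

namespace LeadingTerm

variable {k k' : ℝ → ℝ} {l l' s s' c : ℝ}

lemma congr' (h : LeadingTerm k l s) (hk : ∀ᶠ x in 𝓝[>] (0 : ℝ), k x = k' x) :
    LeadingTerm k' l s :=
  Tendsto.congr' (hk.mono fun x hx => by simp only [hx]) h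

lemma eventually_lt (h : LeadingTerm k l s) (hc : l < c) :
    ∀ᶠ x in 𝓝[>] (0 : ℝ), k x < c * x ^ s := by
  filter_upwards [h.eventually (gt_mem_nhds hc), self_mem_nhdsWithin] with x hx hx0
  exact (div_lt_iff₀ (Real.rpow_pos_of_pos hx0 s)).1 hx

lemma eventually_gt (h : LeadingTerm k l s) (hc : c < l) :
    ∀ᶠ x in 𝓝[>] (0 : ℝ), c * x ^ s < k x := by
  filter_upwards [h.eventually (lt_mem_nhds hc), self_mem_nhdsWithin] with x hx hx0
  exact (lt_div_iff₀ (Real.rpow_pos_of_pos hx0 s)).1 hx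

lemma of_lt (h : LeadingTerm k l s) (hs : s' < s) : LeadingTerm k 0 s' := by
  have := Tendsto.mul h (tendsto_rpow_nhdsGT_zero (sub_pos.2 hs))
  rw [mul_zero] at this
  refine this.congr' ?_
  filter_upwards [self_mem_nhdsWithin] with x hx0
  have hx0 : 0 < x := hx0
  have h1 := (Real.rpow_pos_of_pos hx0 s).ne'
  have h2 := (Real.rpow_pos_of_pos hx0 s').ne'
  rw [Real.rpow_sub hx0]
  field_simp

lemma sub (h : LeadingTerm k l s) (h' : LeadingTerm k' l' s) :
    LeadingTerm (fun x => k x - k' x) (l - l') s :=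
  (Tendsto.sub h h').congr fun x => by ring

lemma unique (h : LeadingTerm k l s) (h' : LeadingTerm k l' s) : l = l' :=
  tendsto_nhds_unique h h'

lemma exponent_unique (h : LeadingTerm k l s) (h' : LeadingTerm k l' s') (hl : l ≠ 0)
    (hl' : l' ≠ 0) : s = s' := by
  rcases lt_trichotomy s s' with hs | hs | hs
  · exact absurd (h.unique (h'.of_lt hs)) hl
  · exact hs
  · exact absurd (h'.unique (h.of_lt hs)) hl'

lemma exponent_lt (h : LeadingTerm k 0 s) (h' : LeadingTerm k l' s') (hl' : l' ≠ 0) : s < s' := by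
  rcases lt_trichotomy s s' with hs | rfl | hs
  · exact hs
  · exact absurd (h'.unique h) hl'
  · exact absurd (h'.unique (h.of_lt hs)) hl'

lemma monomial (c s : ℝ) : LeadingTerm (fun x => c * x ^ s) c s := by
  refine tendsto_const_nhds.congr' ?_
  filter_upwards [self_mem_nhdsWithin] with x hx0
  have := (Real.rpow_pos_of_pos (mem_Ioi.1 hx0) s).ne'
  field_simp

lemma zero (s : ℝ) : LeadingTerm (fun _ => 0) 0 s := by
  simp [LeadingTerm]

lemma tendsto_zero (h : LeadingTerm k l s) (hs : 0 < s) : Tendsto k (𝓝[>] 0) (𝓝 0) := by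
  have := h.of_lt hs
  simpa [LeadingTerm] using this

end LeadingTerm

lemma tendsto_pow_nhdsGT_zero {N : ℕ} (hN : N ≠ 0) :
    Tendsto (fun t : ℝ => t ^ N) (𝓝[>] 0) (𝓝[>] 0) := by
  refine tendsto_nhdsWithin_iff.2 ⟨?_, ?_⟩
  · exact ((continuous_pow N).tendsto' 0 0 (zero_pow hN)).mono_left nhdsWithin_le_nhds
  · filter_upwards [self_mem_nhdsWithin] with t ht
    exact pow_pos (mem_Ioi.1 ht) N

lemma tendsto_root_nhdsGT_zero {N : ℕ} (hN : N ≠ 0) :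
    Tendsto (fun x : ℝ => x ^ (N : ℝ)⁻¹) (𝓝[>] 0) (𝓝[>] 0) := by
  refine tendsto_nhdsWithin_iff.2 ⟨?_, ?_⟩
  · exact tendsto_rpow_nhdsGT_zero (inv_pos.2 (Nat.cast_pos.2 (Nat.pos_of_ne_zero hN)))
  · filter_upwards [self_mem_nhdsWithin] with t ht
    exact Real.rpow_pos_of_pos (mem_Ioi.1 ht) _

namespace PuiseuxOn

variable {N : ℕ} {a a' : ℝ} {k k' : ℝ → ℝ}

lemma mono (h : PuiseuxOn N a k) (ha : a' ≤ a) : PuiseuxOn N a' k := by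
  obtain ⟨K, hK, he⟩ := h
  exact ⟨K, hK.mono fun t ht => ⟨ht.1, ht.2.trans ha⟩, fun t h0 ht => he t h0 (ht.trans ha)⟩

lemma sub (h : PuiseuxOn N a k) (h' : PuiseuxOn N a k') :
    PuiseuxOn N a (fun x => k x - k' x) := by
  obtain ⟨K, hK, he⟩ := h
  obtain ⟨K', hK', he'⟩ := h'
  exact ⟨fun t => K t - K' t, fun t ht => (hK t ht).sub (hK' t ht),
    fun t h0 ht => by simp only [he t h0 ht, he' t h0 ht]⟩

lemma monomial {e : ℝ} {ν : ℕ} (he : (N : ℝ) * e = ν) (c : ℝ) :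
    PuiseuxOn N a (fun x => c * x ^ e) :=
  ⟨fun t => c * t ^ ν, fun _ _ => analyticAt_const.mul (analyticAt_id.pow ν),
    fun t h0 _ => by simp only [pow_rpow_eq_pow he h0]⟩

lemma eventually_eq_zero_or_leadingTerm (h : PuiseuxOn N a k) (hN : N ≠ 0) (ha : 0 < a) :
    (∀ᶠ x in 𝓝[>] (0 : ℝ), k x = 0) ∨ ∃ (n : ℕ) (l : ℝ), l ≠ 0 ∧ LeadingTerm k l (n / N) := by
  obtain ⟨K, hK, he⟩ := h
  have hroot : ∀ᶠ x in 𝓝[>] (0 : ℝ), k x = K (x ^ (N : ℝ)⁻¹) := by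
    filter_upwards [Ioo_mem_nhdsGT ha] with x hx
    have h1 := Real.rpow_inv_natCast_pow hx.1.le hN
    have := he (x ^ (N : ℝ)⁻¹) (Real.rpow_nonneg hx.1.le _) (by rw [h1]; exact hx.2.le)
    rwa [h1] at this
  have hlim : Tendsto (fun x : ℝ => x ^ (N : ℝ)⁻¹) (𝓝[>] 0) (𝓝 0) :=
    (tendsto_root_nhdsGT_zero hN).mono_right nhdsWithin_le_nhds
  rcases (hK 0 ⟨le_rfl, by simp [zero_pow hN, ha.le]⟩).eventually_eq_zero_or_eq_pow_mul with
    h | ⟨n, g, hg, hg0, h⟩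
  · left
    filter_upwards [hroot, hlim.eventually h] with x h1 h2
    rw [h1, h2]
  · refine Or.inr ⟨n, g 0, hg0, (hg.continuousAt.tendsto.comp hlim).congr' ?_⟩
    filter_upwards [hroot, hlim.eventually h, self_mem_nhdsWithin] with x h1 h2 hx0
    have hx0 : 0 < x := hx0
    have hNr : (N : ℝ) ≠ 0 := Nat.cast_ne_zero.2 hN
    rw [Function.comp_apply, h1, h2, root_pow_eq_rpow hN (e := (n : ℝ) / N) (by field_simp) hx0.le]
    have := (Real.rpow_pos_of_pos hx0 ((n : ℝ) / N)).ne'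
    field_simp

lemma exists_nat_eq_mul_exponent (h : PuiseuxOn N a k) (hN : N ≠ 0) (ha : 0 < a) {l s : ℝ}
    (hl : l ≠ 0) (hk : LeadingTerm k l s) : ∃ n : ℕ, (N : ℝ) * s = n := by
  rcases h.eventually_eq_zero_or_leadingTerm hN ha with h | ⟨n, l', hl', h⟩
  · exact absurd ((hk.congr' h).unique (LeadingTerm.zero s)) hl
  · refine ⟨n, ?_⟩
    rw [hk.exponent_unique h hl hl']
    have hNr : (N : ℝ) ≠ 0 := Nat.cast_ne_zero.2 hN
    field_simp

end PuiseuxOn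

namespace TriangleResolution

variable {P : ℝ × ℝ → ℝ} {b η : ℝ} (R : TriangleResolution P b η) (i : Fin R.n)

/-- A real analytic function `K` with `k i (t^N) = K t`. -/
noncomputable def shiftRoot : ℝ → ℝ := (R.k_puiseux i).choose

lemma shiftRoot_eq {t : ℝ} (h0 : 0 ≤ t) (ht : t ^ R.N ≤ R.a) : R.k i (t ^ R.N) = R.shiftRoot i t :=
  (R.k_puiseux i).choose_spec.2 t h0 ht

lemma analyticAt_shiftRoot : AnalyticAt ℝ (R.shiftRoot i) 0 :=
  (R.k_puiseux i).choose_spec.1 0 ⟨le_rfl, by simp [zero_pow R.N_pos.ne', R.a_pos.le]⟩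

lemma shiftRoot_zero : R.shiftRoot i 0 = 0 := by
  obtain ⟨l, s, hs, hk⟩ := R.k_order i
  have h1 := (hk.tendsto_zero (zero_lt_one.trans_le hs)).comp (tendsto_pow_nhdsGT_zero R.N_pos.ne')
  have h2 : Tendsto (R.shiftRoot i) (𝓝[>] 0) (𝓝 (R.shiftRoot i 0)) :=
    (R.analyticAt_shiftRoot i).continuousAt.tendsto.mono_left nhdsWithin_le_nhds
  refine tendsto_nhds_unique h2 (h1.congr' ?_)
  have h3 := (tendsto_pow_nhdsGT_zero R.N_pos.ne').eventually (Ioo_mem_nhdsGT R.a_pos)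
  filter_upwards [h3, self_mem_nhdsWithin] with t ht ht0
  exact R.shiftRoot_eq i (le_of_lt ht0) ht.2.le

/-- The function `S` in the coordinates `(t, y)` with `x = t^N` of the `i`-th domain. -/
noncomputable def pullback (S : ℝ × ℝ → ℝ) (z : ℝ × ℝ) : ℝ :=
  S (z.1 ^ R.N, R.σ i * z.2 + R.shiftRoot i z.1)

lemma analyticAt_pullback {S : ℝ × ℝ → ℝ} (hS : AnalyticAt ℝ S 0) :
    AnalyticAt ℝ (R.pullback i S) 0 := by
  refine AnalyticAt.fun_comp
    (f := fun z : ℝ × ℝ => (z.1 ^ R.N, R.σ i * z.2 + R.shiftRoot i z.1)) ?_ ?_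
  · simpa [zero_pow R.N_pos.ne', R.shiftRoot_zero i, ← Prod.zero_eq_mk] using hS
  · exact (analyticAt_fst.pow _).prod ((analyticAt_const.mul analyticAt_snd).add
      (AnalyticAt.fun_comp (f := fun z : ℝ × ℝ => z.1) (R.analyticAt_shiftRoot i) analyticAt_fst))

lemma comp_shear_eq_pullback (S : ℝ × ℝ → ℝ) {q : ℝ × ℝ} (h0 : 0 < q.1) (h : q.1 < R.a) :
    S (shear (R.σ i) (R.k i) q) = R.pullback i S (q.1 ^ (R.N : ℝ)⁻¹, q.2) := by
  have h1 := Real.rpow_inv_natCast_pow h0.le R.N_pos.ne'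
  have h2 := R.shiftRoot_eq i (Real.rpow_nonneg h0.le (R.N : ℝ)⁻¹) (by rw [h1]; exact h.le)
  rw [h1] at h2
  simp only [pullback, shear, h1, h2]

lemma exists_nat_eq_mul_M : ∃ n : ℕ, (R.N : ℝ) * R.M i = n :=
  (R.G_puiseux i).exists_nat_eq_mul_exponent R.N_pos.ne' R.a_pos (R.H_pos i).ne' (R.G_lead i)

end TriangleResolution

lemma curveComparable_pullback {r : ℕ} {S : Fin r → ℝ × ℝ → ℝ} {b η : ℝ}
    (R : TriangleResolution (fun p => ∏ j, S j p) b η) (i : Fin R.n) {ν : ℕ} {μ u : ℝ}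
    (hμ : (R.N : ℝ) * μ = ν)
    (h : ∀ᶠ x in 𝓝[>] (0 : ℝ), R.g i x < u * x ^ μ ∧ u * x ^ μ < R.G i x) :
    CurveComparable (fun j => R.pullback i (S j)) (R.d i) (R.N * R.α i + ν * R.β i) η (R.β i) ν
      u := by
  have hpow := tendsto_pow_nhdsGT_zero R.N_pos.ne'
  filter_upwards [hpow.eventually h, hpow.eventually (Ioo_mem_nhdsGT R.a_pos),
    self_mem_nhdsWithin] with t h1 h2 ht0
  have ht0 : 0 < t := ht0
  have hmem : (t ^ R.N, u * (t ^ R.N) ^ μ) ∈ sliverSet R.a (R.g i) (R.G i) :=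
    ⟨h2.1, h2.2, h1.1, h1.2⟩
  have h3 := (R.monomial i _ hmem).2 0 (by simpa using R.α_nonneg i) 0 (Nat.zero_le _)
  rw [pow_rpow_eq_pow hμ ht0.le] at h3
  simp only [pderiv2, iteratedDeriv_zero, descProd, Finset.range_zero, Finset.prod_empty, one_mul,
    Nat.cast_zero, sub_zero, Nat.sub_zero] at h3
  have h4 : ∏ j, S j (shear (R.σ i) (R.k i) (t ^ R.N, u * t ^ ν)) =
      ∏ j, R.pullback i (S j) (t, t ^ ν * u) := by
    refine Finset.prod_congr rfl fun j _ => ?_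
    rw [R.comp_shear_eq_pullback i (S j) (q := (t ^ R.N, u * t ^ ν)) h2.1 h2.2,
      Real.pow_rpow_inv_natCast ht0.le R.N_pos.ne', mul_comm u]
  have h5 : (t ^ R.N) ^ (R.α i : ℝ) * (u * t ^ ν) ^ R.β i =
      t ^ ((R.N : ℝ) * R.α i + ν * R.β i) * u ^ R.β i := by
    rw [Real.rpow_add ht0, Real.rpow_mul ht0.le, Real.rpow_natCast, mul_pow, ← pow_mul,
      ← Nat.cast_mul, Real.rpow_natCast]
    ring
  rw [h4, mul_assoc, mul_assoc (η * _), h5] at h3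
  exact h3

lemma shear_image_sliverSet (a : ℝ) (k lo hi : ℝ → ℝ) :
    shear 1 k '' sliverSet a (fun x => lo x - k x) (fun x => hi x - k x) = sliverSet a lo hi := by
  ext ⟨x, y⟩
  constructor
  · rintro ⟨⟨x', y'⟩, ⟨h1, h2, h3, h4⟩, h⟩
    simp only [shear, one_mul, Prod.mk.injEq] at h
    obtain ⟨rfl, rfl⟩ := h
    exact ⟨h1, h2, by dsimp only at h3 ⊢; linarith, by dsimp only at h4 ⊢; linarith⟩
  · rintro ⟨h1, h2, h3, h4⟩
    exact ⟨(x, y - k x), ⟨h1, h2, sub_lt_sub_right h3 _, sub_lt_sub_right h4 _⟩,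
      by simp [shear]⟩

lemma mem_closure_sliverSet {a x y : ℝ} {lo hi : ℝ → ℝ} (hx : x ∈ Ioo 0 a) (hlt : lo x < hi x)
    (hy : y ∈ Icc (lo x) (hi x)) : (x, y) ∈ closure (sliverSet a lo hi) := by
  have h1 : y ∈ closure (Ioo (lo x) (hi x)) := by rwa [closure_Ioo hlt.ne]
  have h2 := image_closure_subset_closure_image (f := fun y : ℝ => (x, y)) (by fun_prop)
    (mem_image_of_mem _ h1)
  refine closure_mono ?_ h2
  rintro _ ⟨w, hw, rfl⟩
  exact ⟨hx.1, hx.2, hw.1, hw.2⟩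

lemma Relation.ReflTransGen.exists_seq {X : Type*} {p : X → X → Prop} {u v : X}
    (h : Relation.ReflTransGen p u v) :
    ∃ (L : ℕ) (φ : ℕ → X), φ 0 = u ∧ φ L = v ∧ ∀ l < L, p (φ l) (φ (l + 1)) := by
  induction h with
  | refl => exact ⟨0, fun _ => u, rfl, rfl, fun l hl => absurd hl (Nat.not_lt_zero l)⟩
  | @tail v w _ hvw ih =>
    obtain ⟨L, φ, h0, hL, hφ⟩ := ih
    refine ⟨L + 1, fun l => if l ≤ L then φ l else w, by simp [h0], by simp, fun l hl => ?_⟩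
    have hl' : l ≤ L := Nat.lt_succ_iff.1 hl
    rcases hl'.lt_or_eq with h | rfl
    · simpa [hl', Nat.succ_le_of_lt h] using hφ l h
    · simpa [hL] using hvw

section Boundaries

variable {a : ℝ} {L : ℕ} {φ : ℕ → ℝ → ℝ}

lemma boundaries_mono (hφ : ∀ l < L, ∀ x ∈ Ioo 0 a, φ l x < φ (l + 1) x)
    {x : ℝ} (hx : x ∈ Ioo 0 a) {l l' : ℕ} (h : l ≤ l') (hl' : l' ≤ L) : φ l x ≤ φ l' x := by
  induction l', h using Nat.le_induction with
  | base => exact le_rfl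
  | succ l' _ ih => exact (ih (by omega)).trans (hφ l' (by omega) x hx).le

lemma sliverSet_subset_of_boundaries
    (hφ : ∀ l < L, ∀ x ∈ Ioo 0 a, φ l x < φ (l + 1) x) {l : ℕ} (hl : l < L) :
    sliverSet a (φ l) (φ (l + 1)) ⊆ sliverSet a (φ 0) (φ L) := by
  rintro q ⟨h1, h2, h3, h4⟩
  exact ⟨h1, h2, (boundaries_mono hφ ⟨h1, h2⟩ (Nat.zero_le l) hl.le).trans_lt h3,
    h4.trans_le (boundaries_mono hφ ⟨h1, h2⟩ (Nat.succ_le_of_lt hl) le_rfl)⟩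

lemma disjoint_sliverSet_of_boundaries
    (hφ : ∀ l < L, ∀ x ∈ Ioo 0 a, φ l x < φ (l + 1) x) {l l' : ℕ} (hl : l < l') (hl' : l' < L) :
    Disjoint (sliverSet a (φ l) (φ (l + 1))) (sliverSet a (φ l') (φ (l' + 1))) := by
  refine Set.disjoint_left.2 ?_
  rintro q ⟨h1, h2, h3, h4⟩ ⟨-, -, h5, -⟩
  exact absurd ((boundaries_mono hφ ⟨h1, h2⟩ (Nat.succ_le_of_lt hl) hl'.le).trans_lt h5)
    (not_lt.2 h4.le)

lemma sliverSet_subset_iUnion_closure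
    (hφ : ∀ l < L, ∀ x ∈ Ioo 0 a, φ l x < φ (l + 1) x) :
    sliverSet a (φ 0) (φ L) ⊆ ⋃ l : Fin L, closure (sliverSet a (φ l) (φ (l + 1))) := by
  classical
  rintro ⟨x, y⟩ ⟨h1, h2, h3, h4⟩
  have hex : ∃ l, y ≤ φ l x := ⟨L, h4.le⟩
  have hle : Nat.find hex ≤ L := Nat.find_min' hex h4.le
  have hne : Nat.find hex ≠ 0 := fun h0 => by
    have := Nat.find_spec hex
    rw [h0] at this
    exact absurd h3 (not_lt.2 this)
  obtain ⟨l, hl⟩ := Nat.exists_eq_succ_of_ne_zero hne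
  have hlL : l < L := by omega
  refine mem_iUnion.2 ⟨⟨l, hlL⟩, mem_closure_sliverSet ⟨h1, h2⟩ (hφ l hlL x ⟨h1, h2⟩) ⟨?_, ?_⟩⟩
  · exact (not_le.1 (Nat.find_min hex (m := l) (by omega))).le
  · have := Nat.find_spec hex
    rwa [hl] at this

end Boundaries

/-- The region between the graphs of `lo` and `hi` is carried by a coordinate change
`(x, y) ↦ (x, y - c x^e)` onto a domain on which all `S j` are comparable to monomials. -/
def IsMonomialPiece {r : ℕ} (S : Fin r → ℝ × ℝ → ℝ) {P : ℝ × ℝ → ℝ} {b η : ℝ}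
    (R : TriangleResolution P b η) (i : Fin R.n) (η' a₀ : ℝ) (lo hi : ℝ → ℝ) : Prop :=
  (∀ x ∈ Ioo 0 a₀, lo x < hi x) ∧
  ∃ (c e H M h m : ℝ) (α : Fin r → ℚ) (β : Fin r → ℕ) (d : Fin r → ℝ),
    0 ≤ c ∧ (e = R.M i ∨ (e = R.m i ∧ ¬ ∀ x ∈ Ioo 0 R.a, R.g i x = 0)) ∧
    PuiseuxOn R.N a₀ (fun x => lo x - c * x ^ e) ∧ PuiseuxOn R.N a₀ (fun x => hi x - c * x ^ e) ∧
    LeadingTerm (fun x => hi x - c * x ^ e) H M ∧ LeadingTerm (fun x => lo x - c * x ^ e) h m ∧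
    1 ≤ M ∧ M < m ∧ 0 ≤ h ∧ 0 < H ∧
    ((∃ j, 0 < β j) ∨ (∀ x ∈ Ioo 0 R.a, R.g i x = 0) ∨
        (∀ᶠ x in 𝓝[>] (0 : ℝ), R.h i * x ^ R.m i ≤ R.g i x) →
      (∀ x ∈ Ioo 0 a₀, lo x - c * x ^ e = 0) ∨ 0 < h) ∧
    ∀ j, 0 ≤ α j ∧ d j ≠ 0 ∧
      MonomialOn (fun q => S j (shear (R.σ i) (R.k i) (shear 1 (fun x => c * x ^ e) q)))
        (sliverSet a₀ (fun x => lo x - c * x ^ e) (fun x => hi x - c * x ^ e)) (α j) (β j) (d j) η'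

lemma exists_division_of_reflTransGen {r : ℕ} {S : Fin r → ℝ × ℝ → ℝ} {P : ℝ × ℝ → ℝ} {b η : ℝ}
    {R : TriangleResolution P b η} {i : Fin R.n} {η' a₀ : ℝ}
    (hchain : Relation.ReflTransGen (IsMonomialPiece S R i η' a₀) (R.g i) (R.G i)) :
    ∃ (L : ℕ) (c e : Fin L → ℝ) (g G : Fin L → ℝ → ℝ) (H M h m : Fin L → ℝ)
        (α : Fin L → Fin r → ℚ) (β : Fin L → Fin r → ℕ) (d : Fin L → Fin r → ℝ),
        (∀ l, shear 1 (fun x => c l * x ^ e l) '' sliverSet a₀ (g l) (G l) ⊆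
          sliverSet a₀ (R.g i) (R.G i)) ∧
        (Pairwise fun l l' =>
          Disjoint (shear 1 (fun x => c l * x ^ e l) '' sliverSet a₀ (g l) (G l))
            (shear 1 (fun x => c l' * x ^ e l') '' sliverSet a₀ (g l') (G l'))) ∧
        sliverSet a₀ (R.g i) (R.G i) ⊆
          (⋃ l, closure (shear 1 (fun x => c l * x ^ e l) '' sliverSet a₀ (g l) (G l))) ∧
        ∀ l : Fin L,
          0 ≤ c l ∧
          (e l = R.M i ∨ (e l = R.m i ∧ ¬ ∀ x ∈ Ioo 0 R.a, R.g i x = 0)) ∧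
          PuiseuxOn R.N a₀ (g l) ∧ PuiseuxOn R.N a₀ (G l) ∧
          LeadingTerm (G l) (H l) (M l) ∧ LeadingTerm (g l) (h l) (m l) ∧
          1 ≤ M l ∧ M l < m l ∧ 0 ≤ h l ∧ 0 < H l ∧
          ((∃ j, 0 < β l j) ∨ (∀ x ∈ Ioo 0 R.a, R.g i x = 0) ∨
              (∀ᶠ x in 𝓝[>] (0 : ℝ), R.h i * x ^ R.m i ≤ R.g i x) →
            (∀ x ∈ Ioo 0 a₀, g l x = 0) ∨ 0 < h l) ∧
          ∀ j : Fin r, 0 ≤ α l j ∧ d l j ≠ 0 ∧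
            MonomialOn
              (fun q => S j (shear (R.σ i) (R.k i) (shear 1 (fun x => c l * x ^ e l) q)))
              (sliverSet a₀ (g l) (G l)) (α l j) (β l j) (d l j) η' := by
  obtain ⟨L, φ, h0, hL, hφ⟩ := hchain.exists_seq
  have hlt : ∀ l < L, ∀ x ∈ Ioo 0 a₀, φ l x < φ (l + 1) x := fun l hl => (hφ l hl).1
  have hex := fun l : Fin L => (hφ l l.2).2
  choose c e H M h m α β d hprop using hex
  refine ⟨L, c, e, fun l x => φ l x - c l * x ^ e l, fun l x => φ (l + 1) x - c l * x ^ e l,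
    H, M, h, m, α, β, d, ?_, ?_, ?_, hprop⟩
  · intro l
    rw [shear_image_sliverSet, ← h0, ← hL]
    exact sliverSet_subset_of_boundaries hlt l.2
  · intro l l' hll
    simp only [shear_image_sliverSet]
    rcases lt_or_gt_of_ne hll with h | h
    · exact disjoint_sliverSet_of_boundaries hlt h l'.2
    · exact (disjoint_sliverSet_of_boundaries hlt h l.2).symm
  · simp only [shear_image_sliverSet]
    rw [← h0, ← hL]
    exact sliverSet_subset_iUnion_closure hlt

/-- Near the curves `y = c x^e`, `c₁ ≤ c ≤ c₂`, all `S j` are comparable to powers of `x` after the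
shift by `c x^e`. -/
structure FaceNeighborhood {r : ℕ} (S : Fin r → ℝ × ℝ → ℝ) {P : ℝ × ℝ → ℝ} {b η : ℝ}
    (R : TriangleResolution P b η) (i : Fin R.n) (η' e c₁ c₂ ρ : ℝ) : Prop where
  one_le : 1 ≤ e
  exists_nat : ∃ ν : ℕ, (R.N : ℝ) * e = ν
  allowed : e = R.M i ∨ (e = R.m i ∧ ¬ ∀ x ∈ Ioo 0 R.a, R.g i x = 0)
  pos : 0 < ρ
  monomialOn : ∀ c ∈ Icc c₁ c₂, ∀ j, ∃ (α : ℚ) (d : ℝ), 0 ≤ α ∧ d ≠ 0 ∧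
    MonomialOn (fun q => S j (shear (R.σ i) (R.k i) (shear 1 (fun x => c * x ^ e) q)))
      {q | 0 < q.1 ∧ q.1 < ρ ∧ |q.2| < ρ * q.1 ^ e} α 0 d η'

namespace FaceNeighborhood

variable {r : ℕ} {S : Fin r → ℝ × ℝ → ℝ} {P : ℝ × ℝ → ℝ} {b η : ℝ}
    {R : TriangleResolution P b η} {i : Fin R.n} {η' e c₁ c₂ ρ a₀ : ℝ}

lemma isMonomialPiece (hN : FaceNeighborhood S R i η' e c₁ c₂ ρ) (ha : a₀ ≤ ρ) {c H h m : ℝ}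
    (hc : c ∈ Icc c₁ c₂) (hc0 : 0 ≤ c) {lo hi : ℝ → ℝ} (hlt : ∀ x ∈ Ioo 0 a₀, lo x < hi x)
    (hlo : PuiseuxOn R.N a₀ lo) (hhi : PuiseuxOn R.N a₀ hi)
    (hloL : LeadingTerm (fun x => lo x - c * x ^ e) h m) (hhiL : LeadingTerm hi (c + H) e)
    (hem : e < m) (hh : 0 ≤ h) (hH : 0 < H)
    (hmore : (∀ x ∈ Ioo 0 R.a, R.g i x = 0) ∨
        (∀ᶠ x in 𝓝[>] (0 : ℝ), R.h i * x ^ R.m i ≤ R.g i x) →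
      (∀ x ∈ Ioo 0 a₀, lo x - c * x ^ e = 0) ∨ 0 < h)
    (hlow : ∀ x ∈ Ioo 0 a₀, -(ρ * x ^ e) ≤ lo x - c * x ^ e)
    (hup : ∀ x ∈ Ioo 0 a₀, hi x - c * x ^ e ≤ ρ * x ^ e) :
    IsMonomialPiece S R i η' a₀ lo hi := by
  obtain ⟨ν, hν⟩ := hN.exists_nat
  have hmono := hN.monomialOn c hc
  choose α d hα hd hmon using hmono
  refine ⟨hlt, c, e, H, e, h, m, α, fun _ => 0, d, hc0, hN.allowed, hlo.sub (.monomial hν c),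
    hhi.sub (.monomial hν c), ?_, hloL, hN.one_le, hem, hh, hH, ?_, fun j => ⟨hα j, hd j, ?_⟩⟩
  · have := hhiL.sub (LeadingTerm.monomial c e)
    rwa [add_sub_cancel_left] at this
  · rintro (⟨j, hj⟩ | h)
    · exact absurd hj (lt_irrefl 0)
    · exact hmore h
  · rintro q ⟨h1, h2, h3, h4⟩
    refine hmon j q ⟨h1, h2.trans_le ha, abs_lt.2 ⟨?_, ?_⟩⟩
    · exact (hlow _ ⟨h1, h2⟩).trans_lt h3
    · exact h4.trans_le (hup _ ⟨h1, h2⟩)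

lemma isMonomialPiece_step (hN : FaceNeighborhood S R i η' e c₁ c₂ ρ) (ha : a₀ ≤ ρ) {c c' : ℝ}
    (hc : c ∈ Icc c₁ c₂) (hc0 : 0 ≤ c) (hcc' : c < c') (hρ : c' ≤ c + ρ) :
    IsMonomialPiece S R i η' a₀ (fun x => c * x ^ e) (fun x => c' * x ^ e) := by
  obtain ⟨ν, hν⟩ := hN.exists_nat
  have hpos : ∀ x ∈ Ioo 0 a₀, 0 < x ^ e := fun x hx => Real.rpow_pos_of_pos hx.1 e
  refine hN.isMonomialPiece ha hc hc0 (h := 0) (m := e + 1) (H := c' - c)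
    (fun x hx => mul_lt_mul_of_pos_right hcc' (hpos x hx)) (.monomial hν c) (.monomial hν c')
    ?_ ?_ (lt_add_one e) le_rfl (sub_pos.2 hcc') (fun _ => Or.inl fun x _ => sub_self _) ?_ ?_
  · simpa only [sub_self] using LeadingTerm.zero (e + 1)
  · rw [add_sub_cancel]
    exact LeadingTerm.monomial c' e
  · intro x hx
    rw [sub_self]
    exact neg_nonpos.2 (mul_pos hN.pos (hpos x hx)).le
  · intro x hx
    nlinarith [hpos x hx]

lemma reflTransGen (hN : FaceNeighborhood S R i η' e c₁ c₂ ρ) (ha : a₀ ≤ ρ) (h0 : 0 ≤ c₁)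
    {c c' : ℝ} (hc : c₁ ≤ c) (hcc' : c ≤ c') (hc' : c' ≤ c₂) :
    Relation.ReflTransGen (IsMonomialPiece S R i η' a₀) (fun x => c * x ^ e)
      (fun x => c' * x ^ e) := by
  obtain ⟨n, hn⟩ := exists_nat_ge ((c' - c) / ρ)
  rw [div_le_iff₀ hN.pos] at hn
  induction n generalizing c with
  | zero =>
    have : c = c' := le_antisymm hcc' (by simpa using hn)
    rw [this]
  | succ n ih =>
    rcases hcc'.eq_or_lt with rfl | hlt
    · exact .refl
    · have hstep : c < min c' (c + ρ) := lt_min hlt (lt_add_of_pos_right c hN.pos)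
      refine Relation.ReflTransGen.head (hN.isMonomialPiece_step ha ⟨hc, hcc'.trans hc'⟩
        (h0.trans hc) hstep (min_le_right _ _)) ?_
      refine ih (hc.trans hstep.le) (min_le_left _ _) ?_
      push_cast at hn
      rcases min_cases c' (c + ρ) with ⟨h, -⟩ | ⟨h, -⟩ <;> rw [h]
      · rw [sub_self]
        exact mul_nonneg n.cast_nonneg hN.pos.le
      · linarith

end FaceNeighborhood

lemma Filter.Eventually.forall_Ioo_nhdsGT {p : ℝ → Prop} (h : ∀ᶠ x in 𝓝[>] (0 : ℝ), p x) :
    ∀ᶠ a in 𝓝[>] (0 : ℝ), ∀ x ∈ Ioo 0 a, p x := by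
  obtain ⟨ε, hε, hp⟩ := mem_nhdsGT_iff_exists_Ioo_subset.1 h
  filter_upwards [Ioo_mem_nhdsGT (mem_Ioi.1 hε)] with a ha x hx
  exact hp ⟨hx.1, hx.2.trans ha.2⟩

lemma exists_pos_forall_of_antitone {r : ℕ} {p : Fin r → ℝ → Prop}
    (hp : ∀ j, ∃ ρ > 0, p j ρ) (hanti : ∀ j ρ ρ', 0 < ρ' → ρ' ≤ ρ → p j ρ → p j ρ') :
    ∃ ρ > 0, ∀ j, p j ρ := by
  have h : ∀ᶠ ρ in 𝓝[>] (0 : ℝ), ∀ j, p j ρ := eventually_all.2 fun j => by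
    obtain ⟨ρ, hρ, h⟩ := hp j
    filter_upwards [Ioo_mem_nhdsGT hρ] with ρ' hρ'
    exact hanti j ρ ρ' hρ'.1 hρ'.2.le h
  obtain ⟨ρ, h1, h2⟩ := (h.and self_mem_nhdsWithin).exists
  exact ⟨ρ, h2, h1⟩

lemma MonomialOn.mono {F : ℝ × ℝ → ℝ} {D D' : Set (ℝ × ℝ)} {α : ℚ} {β : ℕ} {d η : ℝ}
    (h : MonomialOn F D α β d η) (hD : D' ⊆ D) : MonomialOn F D' α β d η :=
  fun p hp => h p (hD hp)

section Chain

variable {r : ℕ} {S : Fin r → ℝ × ℝ → ℝ} {P : ℝ × ℝ → ℝ} {b η : ℝ}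
  {R : TriangleResolution P b η} {i : Fin R.n} {η' : ℝ}

lemma exists_faceNeighborhood {B : ℕ} (E : ∀ j, NewtonExpansion (R.pullback i (S j)) B)
    (hη' : 0 < η') {ν : ℕ} {e : ℝ} (hν : ν ≠ 0) (he : (R.N : ℝ) * e = ν) (he1 : 1 ≤ e)
    (hallowed : e = R.M i ∨ (e = R.m i ∧ ¬ ∀ x ∈ Ioo 0 R.a, R.g i x = 0)) {A : Fin r → ℕ}
    (hA : ∀ j, ∀ k ∈ (E j).s, A j ≤ (E j).o k + ν * k) (hB : ∀ j, A j < ν * B) {c₁ c₂ : ℝ}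
    (hface : ∀ j, ∀ c ∈ Icc c₁ c₂, ((E j).face ν (A j)).eval c ≠ 0) :
    ∃ ρ, FaceNeighborhood S R i η' e c₁ c₂ ρ := by
  obtain ⟨ρ, hρ, h⟩ := exists_pos_forall_of_antitone (fun j =>
    (E j).exists_monomialOn_shift hν R.N_pos.ne' he (hA j) (hB j) (hface j) hη' R.a_pos
      (F := fun q => S j (shear (R.σ i) (R.k i) q))
      fun q h0 h1 => R.comp_shear_eq_pullback i (S j) h0 h1) (by
    intro j ρ ρ' _ hle h c hc
    refine (h c hc).mono ?_
    rintro q ⟨h1, h2, h3⟩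
    exact ⟨h1, h2.trans_le hle,
      h3.trans_le (mul_le_mul_of_nonneg_right hle (Real.rpow_nonneg h1.le e))⟩)
  exact ⟨ρ, he1, ⟨ν, he⟩, hallowed, hρ, fun c hc j =>
    ⟨_, _, by positivity, hface j c hc, h j c hc⟩⟩

/-- The chain of pieces from `δ x^M` up to the upper boundary of the domain. -/
lemma FaceNeighborhood.eventually_reflTransGen_upper {δ ρ : ℝ}
    (hN : FaceNeighborhood S R i η' (R.M i) δ (R.H i) ρ) (hδ : 0 ≤ δ) (hδH : δ < R.H i) :
    ∀ᶠ a₀ in 𝓝[>] (0 : ℝ), Relation.ReflTransGen (IsMonomialPiece S R i η' a₀)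
      (fun x => δ * x ^ R.M i) (R.G i) := by
  obtain ⟨ν, hν⟩ := hN.exists_nat
  set c := max δ (R.H i - ρ / 2) with hcdef
  have hρ := hN.pos
  have hcH : c < R.H i := max_lt hδH (by linarith)
  have hδc : δ ≤ c := le_max_left _ _
  have hcρ : R.H i < c + ρ := by
    have : R.H i - ρ / 2 ≤ c := le_max_right _ _
    linarith
  filter_upwards [Ioo_mem_nhdsGT hρ, Ioo_mem_nhdsGT R.a_pos,
    ((R.G_lead i).eventually_gt hcH).forall_Ioo_nhdsGT,
    ((R.G_lead i).eventually_lt hcρ).forall_Ioo_nhdsGT] with a₀ h1 h2 h3 h4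
  refine (hN.reflTransGen h1.2.le hδ le_rfl hδc hcH.le).tail
    (hN.isMonomialPiece h1.2.le (c := c) (h := 0) (m := R.M i + 1) (H := R.H i - c)
      ⟨hδc, hcH.le⟩ (hδ.trans hδc) h3 (.monomial hν c) ((R.G_puiseux i).mono h2.2.le) ?_ ?_
      (lt_add_one _) le_rfl (sub_pos.2 hcH) (fun _ => Or.inl fun x _ => sub_self _) ?_ ?_)
  · simpa only [sub_self] using LeadingTerm.zero (R.M i + 1)
  · rw [add_sub_cancel]
    exact R.G_lead i
  · intro x hx
    rw [sub_self]
    exact neg_nonpos.2 (mul_pos hρ (Real.rpow_pos_of_pos hx.1 _)).le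
  · intro x hx
    have := h4 x hx
    linarith

/-- The chain of pieces from the lower boundary of the domain, if it does not vanish, up to
`K x^m`. -/
lemma FaceNeighborhood.eventually_reflTransGen_lower {K ρ : ℝ}
    (hN : FaceNeighborhood S R i η' (R.m i) (R.h i) K ρ) (hh : 0 < R.h i) (hK : R.h i < K)
    (hlead : LeadingTerm (R.g i) (R.h i) (R.m i)) (hg : ¬ ∀ x ∈ Ioo 0 R.a, R.g i x = 0) :
    ∀ᶠ a₀ in 𝓝[>] (0 : ℝ), Relation.ReflTransGen (IsMonomialPiece S R i η' a₀)
      (R.g i) (fun x => K * x ^ R.m i) := by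
  obtain ⟨ν, hν⟩ := hN.exists_nat
  set c := min K (R.h i + ρ) with hcdef
  have hρ := hN.pos
  have hhc : R.h i < c := lt_min hK (by linarith)
  have hcK : c ≤ K := min_le_left _ _
  have hdiff : LeadingTerm (fun x => R.g i x - R.h i * x ^ R.m i) 0 (R.m i) := by
    have := hlead.sub (LeadingTerm.monomial (R.h i) (R.m i))
    rwa [sub_self] at this
  have hdata : ∃ h m, R.m i < m ∧ 0 ≤ h ∧
      LeadingTerm (fun x => R.g i x - R.h i * x ^ R.m i) h m ∧
      ∀ᶠ a₀ in 𝓝[>] (0 : ℝ), ((∀ x ∈ Ioo 0 R.a, R.g i x = 0) ∨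
        (∀ᶠ x in 𝓝[>] (0 : ℝ), R.h i * x ^ R.m i ≤ R.g i x) →
          (∀ x ∈ Ioo 0 a₀, R.g i x - R.h i * x ^ R.m i = 0) ∨ 0 < h) := by
    rcases ((R.g_puiseux i).sub (.monomial hν (R.h i))).eventually_eq_zero_or_leadingTerm
      R.N_pos.ne' R.a_pos with hz | ⟨n, l, hl, hlt⟩
    · refine ⟨0, R.m i + 1, lt_add_one _, le_rfl,
        (LeadingTerm.zero _).congr' (hz.mono fun x hx => hx.symm), ?_⟩
      filter_upwards [hz.forall_Ioo_nhdsGT] with a₀ h _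
      exact Or.inl h
    · have hm := hdiff.exponent_lt hlt hl
      rcases lt_or_gt_of_ne hl with hneg | hpos
      · refine ⟨0, (R.m i + n / R.N) / 2, by linarith, le_rfl, hlt.of_lt (by linarith),
          Eventually.of_forall ?_⟩
        rintro a₀ (h | h)
        · exact absurd h hg
        · obtain ⟨x, h1, h2⟩ := (h.and (hlt.eventually_lt hneg)).exists
          rw [zero_mul] at h2
          linarith
      · exact ⟨l, n / R.N, hm, hpos.le, hlt, Eventually.of_forall fun _ _ => Or.inr hpos⟩
  obtain ⟨h, m, hm, hh0, hL, hmore⟩ := hdata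
  filter_upwards [Ioo_mem_nhdsGT hρ, Ioo_mem_nhdsGT R.a_pos, hmore,
    (hlead.eventually_lt hhc).forall_Ioo_nhdsGT,
    (hlead.eventually_gt (show R.h i - ρ < R.h i by linarith)).forall_Ioo_nhdsGT]
    with a₀ h1 h2 hmore h3 h4
  refine Relation.ReflTransGen.head (hN.isMonomialPiece h1.2.le (c := R.h i) (H := c - R.h i)
    ⟨le_rfl, hK.le⟩ hh.le h3 ((R.g_puiseux i).mono h2.2.le) (.monomial hν c) hL ?_ hm hh0
    (sub_pos.2 hhc) hmore ?_ ?_) (hN.reflTransGen h1.2.le hh.le hhc.le hcK le_rfl)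
  · rw [add_sub_cancel]
    exact LeadingTerm.monomial c _
  · intro x hx
    have := h4 x hx
    linarith
  · intro x hx
    have h5 : c ≤ R.h i + ρ := min_le_right _ _
    have := mul_le_mul_of_nonneg_right h5 (Real.rpow_nonneg hx.1.le (R.m i))
    linarith

/-- The piece on which the `S j` are comparable to monomials without a shift. -/
lemma isMonomialPiece_vertex {ε μ δ ρ h m a₀ : ℝ} {α : Fin r → ℚ} {β : Fin r → ℕ} {d : Fin r → ℝ}
    (hmon : ∀ j, 0 ≤ α j ∧ d j ≠ 0 ∧ MonomialOn (fun q => S j (shear (R.σ i) (R.k i) q))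
      {q | 0 < q.1 ∧ q.1 < ρ ∧ 0 < q.2 ∧ q.2 < ρ * q.1 ^ R.M i ∧ ε * q.1 ^ μ < ρ * q.2}
      (α j) (β j) (d j) η') (hδ : 0 < δ) (hδρ : δ ≤ ρ) (ha : a₀ ≤ ρ) {lo : ℝ → ℝ}
    (hlo : PuiseuxOn R.N a₀ lo) (hlead : LeadingTerm lo h m) (hm : R.M i < m) (hh : 0 ≤ h)
    (hmore : (∀ x ∈ Ioo 0 a₀, lo x = 0) ∨ 0 < h)
    (hx : ∀ x ∈ Ioo 0 a₀, 0 ≤ lo x ∧ lo x < δ * x ^ R.M i ∧ ε * x ^ μ ≤ ρ * lo x) :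
    IsMonomialPiece S R i η' a₀ lo (fun x => δ * x ^ R.M i) := by
  obtain ⟨n, hn⟩ := R.exists_nat_eq_mul_M i
  refine ⟨fun x h => (hx x h).2.1, 0, R.M i, δ, R.M i, h, m, α, β, d, le_rfl, Or.inl rfl, ?_⟩
  have hsh : ∀ q, shear 1 (fun _ : ℝ => (0 : ℝ)) q = q := fun q => by simp [shear]
  simp only [zero_mul, sub_zero, hsh]
  refine ⟨hlo, .monomial hn δ, LeadingTerm.monomial δ _, hlead, R.one_le_M i, hm, hh, hδ,
    fun _ => hmore, fun j => ⟨(hmon j).1, (hmon j).2.1, (hmon j).2.2.mono ?_⟩⟩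
  rintro q ⟨h1, h2, h3, h4⟩
  obtain ⟨g1, g2, g3⟩ := hx q.1 ⟨h1, h2⟩
  refine ⟨h1, h2.trans_le ha, g1.trans_lt h3, h4.trans_le ?_, g3.trans_lt ?_⟩
  · exact mul_le_mul_of_nonneg_right hδρ (Real.rpow_nonneg h1.le _)
  · exact mul_lt_mul_of_pos_left h3 (hδ.trans_le hδρ)

lemma exists_vertex_monomialOn {B : ℕ} (E : ∀ j, NewtonExpansion (R.pullback i (S j)) B)
    (hη' : 0 < η') {n : ℕ} (hn : n ≠ 0) (he : (R.N : ℝ) * R.M i = n) {v : Fin r → ℕ} {H : ℝ}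
    {β : ℕ} (hv : NewtonExpansion.LowerVertex E n H β v) {ε μ : ℝ} (hε : 0 ≤ ε)
    (hcase : ∀ j, (∀ k ∈ (E j).s, v j ≤ k) ∨ (ε = 1 ∧ ∃ n' : ℕ, (R.N : ℝ) * μ = n' ∧
      ∀ k ∈ (E j).s, (E j).o (v j) + n' * v j ≤ (E j).o k + n' * k)) :
    ∃ ρ > 0, ∀ j, 0 ≤ ((E j).o (v j) : ℚ) / R.N ∧ (E j).a (v j) 0 ≠ 0 ∧
      MonomialOn (fun q => S j (shear (R.σ i) (R.k i) q))
        {q | 0 < q.1 ∧ q.1 < ρ ∧ 0 < q.2 ∧ q.2 < ρ * q.1 ^ R.M i ∧ ε * q.1 ^ μ < ρ * q.2}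
        (((E j).o (v j) : ℚ) / R.N) (v j) ((E j).a (v j) 0) η' := by
  obtain ⟨ρ, hρ, h⟩ := exists_pos_forall_of_antitone (fun j =>
    (E j).exists_monomialOn_vertex hn R.N_pos.ne' he hε (hv.mem j) (hv.le j) (hv.lt j) (hcase j)
      hη' R.a_pos (F := fun q => S j (shear (R.σ i) (R.k i) q))
      fun q h0 h1 => R.comp_shear_eq_pullback i (S j) h0 h1) (by
    intro j ρ ρ' _ hle h
    refine h.mono ?_
    rintro q ⟨h1, h2, h3, h4, h5⟩
    exact ⟨h1, h2.trans_le hle, h3,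
      h4.trans_le (mul_le_mul_of_nonneg_right hle (Real.rpow_nonneg h1.le _)),
      h5.trans_le (mul_le_mul_of_nonneg_right hle h3.le)⟩)
  exact ⟨ρ, hρ, fun j => ⟨by positivity, (E j).a_ne _ (hv.mem j), h j⟩⟩

end Chain

lemma eventually_reflTransGen_isMonomialPiece {r : ℕ} {S : Fin r → ℝ × ℝ → ℝ}
    (hSa : ∀ j, AnalyticAt ℝ (S j) 0) {b η : ℝ} (hη1 : η < 1)
    (R : TriangleResolution (fun p => ∏ j, S j p) b η) {η' : ℝ} (hη' : 0 < η') (i : Fin R.n) :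
    ∀ᶠ a₀ in 𝓝[>] (0 : ℝ),
      Relation.ReflTransGen (IsMonomialPiece S R i η' a₀) (R.g i) (R.G i) := by
  obtain ⟨n, hn⟩ := R.exists_nat_eq_mul_M i
  have hNpos : (0 : ℝ) < R.N := Nat.cast_pos.2 R.N_pos
  have hM0 : 0 < R.M i := zero_lt_one.trans_le (R.one_le_M i)
  have hn0 : n ≠ 0 := by
    rintro rfl
    have := mul_pos hNpos hM0
    rw [hn, Nat.cast_zero] at this
    exact lt_irrefl 0 this
  have hn1 : (1 : ℝ) ≤ n := Nat.one_le_cast.2 (Nat.pos_of_ne_zero hn0)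
  have hgcase : (∀ x ∈ Ioo 0 R.a, R.g i x = 0) ∨ ((¬ ∀ x ∈ Ioo 0 R.a, R.g i x = 0) ∧
      0 < R.h i ∧ R.M i < R.m i ∧ LeadingTerm (R.g i) (R.h i) (R.m i)) := by
    by_cases hz : ∀ x ∈ Ioo 0 R.a, R.g i x = 0
    · exact Or.inl hz
    · have hβ : 0 < R.β i := Nat.pos_of_ne_zero fun h0 => hz (R.g_of_zero i h0)
      exact Or.inr ⟨hz, (R.g_of_pos i hβ).resolve_left hz⟩
  have hgzero : (∀ x ∈ Ioo 0 R.a, R.g i x = 0) → ∀ᶠ x in 𝓝[>] (0 : ℝ), (0 : ℝ) = R.g i x :=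
    fun hz => by
      filter_upwards [Ioo_mem_nhdsGT R.a_pos] with x hx
      exact (hz x hx).symm
  have hgM : LeadingTerm (R.g i) 0 (R.M i) := by
    rcases hgcase with hz | ⟨-, -, hMm, hlead⟩
    · exact (LeadingTerm.zero _).congr' (hgzero hz)
    · exact hlead.of_lt hMm
  have hupper : ∀ {μ : ℝ} (u : ℝ), R.M i < μ → ∀ᶠ x in 𝓝[>] (0 : ℝ), u * x ^ μ < R.G i x := by
    intro μ u hμ
    have h1 := ((LeadingTerm.monomial u μ).of_lt hμ).eventually_lt (half_pos (R.H_pos i))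
    have h2 := (R.G_lead i).eventually_gt (half_lt_self (R.H_pos i))
    filter_upwards [h1, h2] with x h1 h2
    exact h1.trans h2
  obtain ⟨B, hB⟩ := exists_nat_gt ((R.N : ℝ) * R.α i + n * R.β i)
  have hB' : (R.N : ℝ) * R.α i + n * R.β i < n * B :=
    hB.trans_le (le_mul_of_one_le_left B.cast_nonneg hn1)
  have hQ := fun j => R.analyticAt_pullback i (hSa j)
  have E := fun j => ((hQ j).nonempty_newtonExpansion B).some
  obtain ⟨v, hv⟩ := NewtonExpansion.exists_lowerVertex E (R.d_ne i) hη1 hn0 (R.H_pos i) hQ hB'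
    fun u hu => curveComparable_pullback R i hn
      ((hgM.eventually_lt hu.1).and ((R.G_lead i).eventually_gt hu.2))
  have hfaceM : ∀ δ > 0, ∃ ρ, FaceNeighborhood S R i η' (R.M i) δ (R.H i) ρ := fun δ hδ =>
    exists_faceNeighborhood E hη' hn0 hn (R.one_le_M i) (Or.inl rfl) hv.le hv.lt
      fun j c hc => hv.face_ne j c ⟨hδ.trans_le hc.1, hc.2⟩
  rcases hgcase with hz | ⟨hz, hh, hMm, hlead⟩
  · have hvle : ∀ j, ∀ k ∈ (E j).s, v j ≤ k := by
      intro j k hk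
      by_contra! hlt
      set ν := n + (E j).o k + 1 with hν
      have hνμ : (R.N : ℝ) * ((ν : ℝ) / R.N) = ν := by field_simp
      have hMμ : R.M i < (ν : ℝ) / R.N := by
        rw [lt_div_iff₀ hNpos, mul_comm, hn]
        exact Nat.cast_lt.2 (by omega)
      have h := (hv.of_larger_weight (ν := ν) (by omega) le_rfl (R.d_ne i) hη1 fun u hu =>
        curveComparable_pullback R i hνμ (by
          filter_upwards [hgzero hz, hupper u hMμ, self_mem_nhdsWithin] with x h1 h2 hx0
          exact ⟨h1 ▸ mul_pos hu (Real.rpow_pos_of_pos hx0 _), h2⟩)).1 j k hk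
      have h2 : ν * k + ν ≤ ν * v j := by
        rw [← Nat.mul_succ]
        exact Nat.mul_le_mul_left ν hlt
      omega
    obtain ⟨ρ, hρ, hmon⟩ := exists_vertex_monomialOn E hη' hn0 hn hv (ε := 0) (μ := 0) le_rfl
      fun j => Or.inl (hvle j)
    set δ := min ρ (R.H i / 2)
    have hδ : 0 < δ := lt_min hρ (half_pos (R.H_pos i))
    have hδH : δ < R.H i := (min_le_right _ _).trans_lt (half_lt_self (R.H_pos i))
    obtain ⟨ρ', hN⟩ := hfaceM δ hδ
    filter_upwards [hN.eventually_reflTransGen_upper hδ.le hδH, Ioo_mem_nhdsGT hρ,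
      Ioo_mem_nhdsGT R.a_pos] with a₀ hchain h1 h2
    have hz' : ∀ x ∈ Ioo 0 a₀, R.g i x = 0 := fun x hx => hz x ⟨hx.1, hx.2.trans h2.2⟩
    refine Relation.ReflTransGen.head (isMonomialPiece_vertex hmon hδ (min_le_left _ _) h1.2.le
      ((R.g_puiseux i).mono h2.2.le) ((LeadingTerm.zero (R.M i + 1)).congr' (hgzero hz))
      (lt_add_one _) le_rfl (Or.inl hz') fun x hx => ?_) hchain
    rw [hz' x hx]
    exact ⟨le_rfl, mul_pos hδ (Real.rpow_pos_of_pos hx.1 _), by simp⟩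
  · obtain ⟨n', hn'⟩ := (R.g_puiseux i).exists_nat_eq_mul_exponent R.N_pos.ne' R.a_pos hh.ne' hlead
    have hnn' : n < n' := by
      have := mul_lt_mul_of_pos_left hMm hNpos
      rw [hn, hn'] at this
      exact_mod_cast this
    obtain ⟨hle, hlt, hface⟩ := hv.of_larger_weight hnn' hh.le (R.d_ne i) hη1 fun u hu =>
      curveComparable_pullback R i hn' ((hlead.eventually_lt hu).and (hupper u hMm))
    obtain ⟨ρ, hρ, hmon⟩ := exists_vertex_monomialOn E hη' hn0 hn hv (ε := 1) (μ := R.m i)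
      zero_le_one fun j => Or.inr ⟨rfl, n', hn', hle j⟩
    set δ := min ρ (R.H i / 2)
    have hδ : 0 < δ := lt_min hρ (half_pos (R.H_pos i))
    have hδH : δ < R.H i := (min_le_right _ _).trans_lt (half_lt_self (R.H_pos i))
    obtain ⟨ρ', hN⟩ := hfaceM δ hδ
    set K := max ρ⁻¹ (R.h i + 1)
    have hhK : R.h i < K := (lt_add_one _).trans_le (le_max_right _ _)
    have hρK : 1 ≤ ρ * K := by
      rw [← mul_inv_cancel₀ hρ.ne']
      exact mul_le_mul_of_nonneg_left (le_max_left _ _) hρ.le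
    obtain ⟨ρ'', hN'⟩ := exists_faceNeighborhood (η' := η') E hη' (Nat.ne_zero_of_lt hnn') hn'
      ((R.one_le_M i).trans hMm.le) (Or.inr ⟨rfl, hz⟩) hle hlt (c₁ := R.h i) (c₂ := K)
      fun j c hc => hface j c hc.1 (hh.trans_le hc.1)
    have hKδ : ∀ᶠ x in 𝓝[>] (0 : ℝ), K * x ^ R.m i < δ * x ^ R.M i :=
      ((LeadingTerm.monomial K (R.m i)).of_lt hMm).eventually_lt hδ
    filter_upwards [hN.eventually_reflTransGen_upper hδ.le hδH,
      hN'.eventually_reflTransGen_lower hh hhK hlead hz, Ioo_mem_nhdsGT hρ,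
      hKδ.forall_Ioo_nhdsGT] with a₀ hchain hchain' h1 h2
    refine hchain'.trans (Relation.ReflTransGen.head (isMonomialPiece_vertex hmon hδ
      (min_le_left _ _) h1.2.le (.monomial hn' K) (LeadingTerm.monomial K _) hMm
      (hh.trans hhK).le (Or.inr (hh.trans hhK)) fun x hx => ?_) hchain)
    have hpos := Real.rpow_pos_of_pos hx.1 (R.m i)
    refine ⟨(mul_pos (hh.trans hhK) hpos).le, h2 x hx, ?_⟩
    rw [← mul_assoc]
    exact mul_le_mul_of_nonneg_right hρK hpos.le

theorem simultaneous_resolution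
    (r : ℕ) (S : Fin r → ℝ × ℝ → ℝ)
    (hSa : ∀ j, AnalyticAt ℝ (S j) 0) (hS0 : ∀ j, S j 0 = 0)
    (hSnz : ∀ j, ¬ (∀ᶠ p in 𝓝 (0 : ℝ × ℝ), S j p = 0))
    (b : ℝ) (hb : 0 < b) (η : ℝ) (hη : 0 < η) (hη1 : η < 1)
    (R : TriangleResolution (fun p => ∏ j, S j p) b η)
    (η' : ℝ) (hη' : 0 < η') :
    ∃ a₀ : ℝ, 0 < a₀ ∧ a₀ ≤ R.a ∧ ∀ i : Fin R.n,
      ∃ (L : ℕ) (c e : Fin L → ℝ) (g G : Fin L → ℝ → ℝ) (H M h m : Fin L → ℝ)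
        (α : Fin L → Fin r → ℚ) (β : Fin L → Fin r → ℕ) (d : Fin L → Fin r → ℝ),
        -- the pieces, in the coordinates of `D_i'`, divide the part `x < a₀` of `D_i'`
        (∀ l, shear 1 (fun x => c l * x ^ e l) '' sliverSet a₀ (g l) (G l) ⊆
          sliverSet a₀ (R.g i) (R.G i)) ∧
        (Pairwise fun l l' =>
          Disjoint (shear 1 (fun x => c l * x ^ e l) '' sliverSet a₀ (g l) (G l))
            (shear 1 (fun x => c l' * x ^ e l') '' sliverSet a₀ (g l') (G l'))) ∧
        sliverSet a₀ (R.g i) (R.G i) ⊆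
          (⋃ l, closure (shear 1 (fun x => c l * x ^ e l) '' sliverSet a₀ (g l) (G l))) ∧
        ∀ l : Fin L,
          -- the additional coordinate change `(x, y) ↦ (x, y - c x^e)`, `e = M_i` or `e = m_i`
          0 ≤ c l ∧
          (e l = R.M i ∨ (e l = R.m i ∧ ¬ ∀ x ∈ Ioo 0 R.a, R.g i x = 0)) ∧
          -- the form of the new domain
          PuiseuxOn R.N a₀ (g l) ∧ PuiseuxOn R.N a₀ (G l) ∧
          LeadingTerm (G l) (H l) (M l) ∧ LeadingTerm (g l) (h l) (m l) ∧
          1 ≤ M l ∧ M l < m l ∧ 0 ≤ h l ∧ 0 < H l ∧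
          ((∃ j, 0 < β l j) ∨ (∀ x ∈ Ioo 0 R.a, R.g i x = 0) ∨
              (∀ᶠ x in 𝓝[>] (0 : ℝ), R.h i * x ^ R.m i ≤ R.g i x) →
            (∀ x ∈ Ioo 0 a₀, g l x = 0) ∨ 0 < h l) ∧
          -- every `S_j` is comparable to a monomial in the new coordinates
          ∀ j : Fin r, 0 ≤ α l j ∧ d l j ≠ 0 ∧
            MonomialOn
              (fun q => S j (shear (R.σ i) (R.k i) (shear 1 (fun x => c l * x ^ e l) q)))
              (sliverSet a₀ (g l) (G l)) (α l j) (β l j) (d l j) η' := by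
  have h : ∀ᶠ a₀ in 𝓝[>] (0 : ℝ), ∀ i,
      Relation.ReflTransGen (IsMonomialPiece S R i η' a₀) (R.g i) (R.G i) :=
    eventually_all.2 fun i => eventually_reflTransGen_isMonomialPiece hSa hη1 R hη' i
  obtain ⟨a₀, hchain, ha⟩ := (h.and (Ioo_mem_nhdsGT R.a_pos)).exists
  exact ⟨a₀, ha.1, ha.2.le, fun i => exists_division_of_reflTransGen (hchain i)⟩
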